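/- Assume (H1) and (H2). Then the essential spectrum of the linearized operator A = J(H₀ + Df(φ)) is contained in the imaginary axis {z ∈ ℂ : Re z = 0}, and the number of eigenvalues of A in {z ∈ ℂ : Re z > 0} is finite. -/

import Mathlib

open MeasureTheory ENNReal

noncomputable section

/-- Euclidean space ℝ^N. -/
abbrev Rn (N : ℕ) := EuclideanSpace ℝ (Fin N)

variable {N : ℕ}

section BasicDefs

variable {G : Type} [NormedAddCommGroup G] [NormedSpace ℝ G]

/-- Pointwise Laplacian, defined via the second iterated Fréchet derivative. -/
def lap (f : Rn N → G) (x : Rn N) : G :=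
  ∑ i : Fin N,
    iteratedFDeriv ℝ 2 f x ![EuclideanSpace.single i 1, EuclideanSpace.single i 1]

/-- Sobolev H^k norm (sum of L² norms of iterated derivatives up to order k). -/
def sobNorm (k : ℕ) (f : Rn N → G) : ℝ≥0∞ :=
  ∑ i ∈ Finset.range (k + 1), eLpNorm (iteratedFDeriv ℝ i f) 2 volume

/-- (Strong) membership in the Sobolev space H^k. -/
def MemSobolev (k : ℕ) (f : Rn N → G) : Prop :=
  ContDiff ℝ (k : ℕ∞) f ∧ ∀ i ≤ k, MemLp (iteratedFDeriv ℝ i f) 2 volume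

/-- L^q norm in time on (0,T) of an ℝ≥0∞-valued function. -/
def timeLp (q : ℝ≥0∞) (T : ℝ) (Φ : ℝ → ℝ≥0∞) : ℝ≥0∞ :=
  if q = ∞ then essSup Φ (volume.restrict (Set.Ioo 0 T))
  else (∫⁻ t in Set.Ioo 0 T, Φ t ^ q.toReal) ^ (1 / q.toReal)

/-- ‖e^{-λ·}f‖_{L^q((0,T),L^r)}. -/
def twNorm (q r : ℝ≥0∞) (lam T : ℝ) (f : ℝ → Rn N → G) : ℝ≥0∞ :=
  timeLp q T (fun t => ENNReal.ofReal (Real.exp (-(lam * t))) * eLpNorm (f t) r volume)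

/-- The weighted norm ‖f‖_{L^{q,λ}_T L^r} = e^{λT}‖e^{-λ·}f‖_{L^q((0,T),L^r)}. -/
def wNorm (q r : ℝ≥0∞) (lam T : ℝ) (f : ℝ → Rn N → G) : ℝ≥0∞ :=
  ENNReal.ofReal (Real.exp (lam * T)) * twNorm q r lam T f

/-- The weighted norm ‖f‖_{L^{∞,λ}_T H²}. -/
def wNormH2 (lam T : ℝ) (f : ℝ → Rn N → G) : ℝ≥0∞ :=
  ENNReal.ofReal (Real.exp (lam * T)) *
    essSup (fun t => ENNReal.ofReal (Real.exp (-(lam * t))) * sobNorm 2 (f t))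
      (volume.restrict (Set.Ioo 0 T))

/-- Pointwise time derivative of a time-dependent function. -/
def tderiv (v : ℝ → Rn N → G) : ℝ → Rn N → G :=
  fun t x => deriv (fun s => v s x) t

/-- The norm ‖v‖_{X_T} = ‖v‖_{L^{∞,λ}_T H²} + ‖∂ₜv‖_{L^{q₁,λ}_T L^{r₁}} + ‖∂ₜv‖_{L^{q₂,λ}_T L^{r₂}}. -/
def XNorm (q₁ r₁ q₂ r₂ : ℝ≥0∞) (lam T : ℝ) (v : ℝ → Rn N → G) : ℝ≥0∞ :=
  wNormH2 lam T v + wNorm q₁ r₁ lam T (tderiv v) + wNorm q₂ r₂ lam T (tderiv v)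

end BasicDefs

/-- A pair (q,r) is admissible: 2/q = N(1/2-1/r), 2 ≤ r ≤ 2N/(N-2)
(2 ≤ r < ∞ if N = 2, 2 ≤ r ≤ ∞ if N = 1), (q,r) ≠ (2,∞). -/
def Admissible (N : ℕ) (q r : ℝ≥0∞) : Prop :=
  2 ≤ r ∧ 2 / q = (N : ℝ≥0∞) * (1 / 2 - 1 / r) ∧
    (3 ≤ N → r ≤ 2 * (N : ℝ≥0∞) / ((N : ℝ≥0∞) - 2)) ∧
    (N = 2 → r ≠ ∞) ∧ ¬(q = 2 ∧ r = ∞)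

/-- Subcriticality: 1 < p < 2* - 1 with 2* = 2N/(N-2) for N ≥ 3 and 2* = ∞ for N = 1,2. -/
def Subcrit (N : ℕ) (p : ℝ) : Prop :=
  1 < p ∧ (3 ≤ N → p < 2 * (N : ℝ) / ((N : ℝ) - 2) - 1)

/-- The nonlinearity f(z) = -g(|z|²)z, identifying ℝ² with ℂ. -/
def fpot (g : ℝ → ℝ) : ℂ → ℂ :=
  fun z => -((g (Complex.normSq z) : ℝ) : ℂ) * z

/-- The Hölder-type bound on the derivative required in (H1). -/
def H1bound (p : ℝ) (f : ℂ → ℂ) : Prop :=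
  ContDiff ℝ 1 f ∧ f 0 = 0 ∧ fderiv ℝ f 0 = 0 ∧
    ∃ C : ℝ,
      (p ≤ 2 → ∀ z₁ z₂ : ℂ,
        ‖fderiv ℝ f z₁ - fderiv ℝ f z₂‖ ≤ C * ‖z₁ - z₂‖ ^ (p - 1)) ∧
      (2 < p → ∀ z₁ z₂ : ℂ,
        ‖fderiv ℝ f z₁ - fderiv ℝ f z₂‖ ≤ C * (‖z₁‖ ^ (p - 2) + ‖z₂‖ ^ (p - 2)) * ‖z₁ - z₂‖)

/-- Hypothesis (H1). -/
structure H1full (N : ℕ) (g : ℝ → ℝ) (f₁ f₂ : ℂ → ℂ) (p₁ p₂ : ℝ) : Prop where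
  gcont : ContinuousOn g (Set.Ici 0)
  hsum : ∀ z, fpot g z = f₁ z + f₂ z
  sub1 : Subcrit N p₁
  sub2 : Subcrit N p₂
  bd1 : H1bound p₁ f₁
  bd2 : H1bound p₂ f₂

/-- Hypothesis (H2): ω > 0 and φ ∈ H¹ is a nontrivial solution of -Δφ + ωφ - g(|φ|²)φ = 0. -/
def H2hyp (ω : ℝ) (g : ℝ → ℝ) (φ : Rn N → ℂ) : Prop :=
  0 < ω ∧ φ ≠ 0 ∧ MemSobolev 1 φ ∧
    ∀ x, -(lap φ x) + (ω : ℂ) * φ x - ((g (Complex.normSq (φ x)) : ℝ) : ℂ) * φ x = 0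

/-- The linearized operator A = JH acting on ℝ²-valued functions, in the identification
ℝ² ≅ ℂ (so that J is multiplication by -i). -/
def Aop (g : ℝ → ℝ) (ω : ℝ) (φ : Rn N → ℂ) (u : Rn N → ℂ) : Rn N → ℂ :=
  fun x => -Complex.I * (-(lap u x) + (ω : ℂ) * u x + fderiv ℝ (fpot g) (φ x) (u x))

/-- Complexification of a real-linear map on ℝ² ≅ ℂ, acting on ℂ². -/
def cext (T : ℂ →L[ℝ] ℂ) (w : ℂ × ℂ) : ℂ × ℂ :=
  (((T 1).re : ℂ) * w.1 + ((T Complex.I).re : ℂ) * w.2,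
   ((T 1).im : ℂ) * w.1 + ((T Complex.I).im : ℂ) * w.2)

/-- The complexified linearized operator A = J(H₀ + Df(φ)) acting on ℂ²-valued functions. -/
def AopC (g : ℝ → ℝ) (ω : ℝ) (φ : Rn N → ℂ) (u : Rn N → ℂ × ℂ) : Rn N → ℂ × ℂ :=
  fun x =>
    (-(lap (fun y => (u y).2) x) + (ω : ℂ) * (u x).2 +
        (cext (fderiv ℝ (fpot g) (φ x)) (u x)).2,
     -(-(lap (fun y => (u y).1) x) + (ω : ℂ) * (u x).1 +
        (cext (fderiv ℝ (fpot g) (φ x)) (u x)).1))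

/-- z is an eigenvalue of the (complexified) linearized operator A. -/
def IsEigen (g : ℝ → ℝ) (ω : ℝ) (φ : Rn N → ℂ) (z : ℂ) : Prop :=
  ∃ χ : Rn N → ℂ × ℂ, χ ≠ 0 ∧ MemSobolev 2 χ ∧ ∀ x, AopC g ω φ χ x = z • χ x

/-- Hypothesis (H3): A has an eigenvalue with positive real part. -/
def H3hyp (g : ℝ → ℝ) (ω : ℝ) (φ : Rn N → ℂ) : Prop :=
  ∃ z : ℂ, 0 < z.re ∧ IsEigen g ω φ z

/-- u is a (global H¹) solution of i∂ₜu + Δu + g(|u|²)u = 0. -/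
def IsNLS (g : ℝ → ℝ) (u : ℝ → Rn N → ℂ) : Prop :=
  (∀ t, MemSobolev 1 (u t)) ∧
    ∀ t x, HasDerivAt (fun s => u s x)
      (Complex.I * (lap (u t) x + ((g (Complex.normSq (u t x)) : ℝ) : ℂ) * u t x)) t

/-- Orbital stability of the standing wave e^{iωt}φ. -/
def OrbStable (g : ℝ → ℝ) (ω : ℝ) (φ : Rn N → ℂ) : Prop :=
  ∀ ε : ℝ, 0 < ε → ∃ δ : ℝ, 0 < δ ∧
    ∀ u : ℝ → Rn N → ℂ, IsNLS g u →
      sobNorm 1 (fun x => u 0 x - φ x) < ENNReal.ofReal δ →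
      ∀ t : ℝ, 0 ≤ t → ∃ (θ : ℝ) (y : Rn N),
        sobNorm 1 (fun x => u t x - Complex.exp (θ * Complex.I) * φ (x + y)) <
          ENNReal.ofReal ε

/-- h(v) = J[f(φ+v) - f(φ) - Df(φ)v] in the identification ℝ² ≅ ℂ. -/
def hfun (f : ℂ → ℂ) (φ v : Rn N → ℂ) : Rn N → ℂ :=
  fun x => -Complex.I * (f (φ x + v x) - f (φ x) - fderiv ℝ f (φ x) (v x))

/-- ∂ₜ h(v) = J[Df(φ+v) - Df(φ)]∂ₜv. -/
def hderiv (f : ℂ → ℂ) (φ : Rn N → ℂ) (v : ℝ → Rn N → ℂ) : ℝ → Rn N → ℂ :=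
  fun t x => -Complex.I * ((fderiv ℝ f (φ x + v t x) - fderiv ℝ f (φ x)) (tderiv v t x))

/-- v is a (global H²) solution of ∂ₜv = Av + h(v). -/
def IsLinSol (g : ℝ → ℝ) (ω : ℝ) (φ : Rn N → ℂ) (v : ℝ → Rn N → ℂ) : Prop :=
  (∀ t, MemSobolev 2 (v t)) ∧
    ∀ t x, HasDerivAt (fun s => v s x)
      (Aop g ω φ (v t) x + hfun (fpot g) φ (v t) x) t

/-- The operator A = JH₀ + V with a bounded 2×2 matrix potential V,
acting on ℂ²-valued functions. -/
def AVop (ω : ℝ) (V : Rn N → Matrix (Fin 2) (Fin 2) ℝ) (u : Rn N → ℂ × ℂ) :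
    Rn N → ℂ × ℂ :=
  fun x =>
    ((-(lap (fun y => (u y).2) x) + (ω : ℂ) * (u x).2) +
        ((V x 0 0 : ℝ) : ℂ) * (u x).1 + ((V x 0 1 : ℝ) : ℂ) * (u x).2,
     (-(-(lap (fun y => (u y).1) x) + (ω : ℂ) * (u x).1)) +
        ((V x 1 0 : ℝ) : ℂ) * (u x).1 + ((V x 1 1 : ℝ) : ℂ) * (u x).2)

/-- V is a bounded (L^∞) matrix potential. -/
def VBounded (V : Rn N → Matrix (Fin 2) (Fin 2) ℝ) : Prop :=
  (∀ i j, Measurable fun x => V x i j) ∧ ∃ M : ℝ, ∀ x i j, |V x i j| ≤ M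

/-- S is the strongly continuous group on L² generated by the operator L. -/
structure IsEvolGroupC (L : (Rn N → ℂ × ℂ) → (Rn N → ℂ × ℂ))
    (S : ℝ → (Rn N → ℂ × ℂ) → (Rn N → ℂ × ℂ)) : Prop where
  zero : ∀ u, S 0 u = u
  comp : ∀ s t u, S (s + t) u = S s (S t u)
  lin : ∀ (t : ℝ) (a : ℂ) (u v : Rn N → ℂ × ℂ),
    S t (fun x => a • u x + v x) = fun x => a • S t u x + S t v x
  cont : ∀ u, MemLp u 2 volume → ∀ t₀ : ℝ,
    Filter.Tendsto (fun t => eLpNorm (fun x => S t u x - S t₀ u x) 2 volume)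
      (nhds t₀) (nhds 0)
  gen : ∀ u, MemSobolev 2 u → ∀ t : ℝ,
    MemSobolev 2 (S t u) ∧ ∀ x, HasDerivAt (fun s => S s u x) (L (S t u) x) t

/-- Γ[f](t) = ∫₀ᵗ e^{(t-s)A} f(s) ds. -/
def Gamma (S : ℝ → (Rn N → ℂ × ℂ) → (Rn N → ℂ × ℂ)) (f : ℝ → Rn N → ℂ × ℂ)
    (t : ℝ) : Rn N → ℂ × ℂ :=
  fun x => ∫ s in (0:ℝ)..t, S (t - s) (f s) x

/-- α = min{1, r₁-2, r₂-2}. -/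
def alphaConst (r₁ r₂ : ℝ) : ℝ := min 1 (min (r₁ - 2) (r₂ - 2))

/-- Real part of a ℂ²-valued function, as an element of the real space L²(ℝ^N,ℝ²) ≅ L²(ℝ^N,ℂ). -/
def reChi (χ : Rn N → ℂ × ℂ) : Rn N → ℂ :=
  fun x => ((χ x).1.re : ℂ) + ((χ x).2.re : ℂ) * Complex.I

/-- The constant k = 1 if Im λ* = 0, k = exp(2π Re λ*/|Im λ*|) otherwise. -/
def kconst (lam : ℂ) : ℝ :=
  if lam.im = 0 then 1 else Real.exp (2 * Real.pi * lam.re / |lam.im|)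

/-- The defining property of T_δ:
log(ε₀/(kδ)) ≤ Re λ* T_δ ≤ log(ε₀/δ) and Im λ* T_δ ∈ 2πℤ. -/
def TdeltaProp (lam : ℂ) (ε₀ δ T : ℝ) : Prop :=
  Real.log (ε₀ / (kconst lam * δ)) ≤ lam.re * T ∧
    lam.re * T ≤ Real.log (ε₀ / δ) ∧ ∃ n : ℤ, lam.im * T = 2 * Real.pi * (n : ℝ)

/-- The real L² inner product on L²(ℝ^N,ℝ²) in the identification ℝ² ≅ ℂ. -/
def realL2inner (u v : Rn N → ℂ) : ℝ :=
  ∫ x, ((starRingEnd ℂ) (u x) * v x).re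

/-- The L² inner product for ℂ²-valued functions. -/
def l2innerC2 (u v : Rn N → ℂ × ℂ) : ℂ :=
  ∫ x, ((starRingEnd ℂ) (u x).1 * (v x).1 + (starRingEnd ℂ) (u x).2 * (v x).2)

section Resolvent

variable {G : Type} [NormedAddCommGroup G] [NormedSpace ℂ G]

/-- z belongs to the resolvent set of the operator L with domain `dom`:
there is a bounded everywhere-defined inverse of z - L mapping L² into the domain. -/
def InResSet (L : (Rn N → G) → (Rn N → G)) (dom : (Rn N → G) → Prop) (z : ℂ) : Prop :=
  ∃ R : (Rn N → G) → (Rn N → G),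
    (∀ (a : ℂ) (u v : Rn N → G), R (fun x => a • u x + v x) = fun x => a • R u x + R v x) ∧
    (∀ u, MemLp u 2 volume → dom (R u)) ∧
    (∀ u, MemLp u 2 volume → ∀ x, z • R u x - L (R u) x = u x) ∧
    (∀ u, dom u → ∀ x, R (fun y => z • u y - L u y) x = u x) ∧
    ∃ M : ℝ, ∀ u, eLpNorm (R u) 2 volume ≤ ENNReal.ofReal M * eLpNorm u 2 volume

/-- The spectrum of the operator L with domain `dom`. -/
def specSet (L : (Rn N → G) → (Rn N → G)) (dom : (Rn N → G) → Prop) : Set ℂ :=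
  {z | ¬ InResSet L dom z}

end Resolvent

/-- z belongs to the essential spectrum of A (Weyl singular sequence characterization). -/
def InEssSpec (g : ℝ → ℝ) (ω : ℝ) (φ : Rn N → ℂ) (z : ℂ) : Prop :=
  ∃ u : ℕ → Rn N → ℂ × ℂ,
    (∀ n, MemSobolev 2 (u n)) ∧ (∀ n, eLpNorm (u n) 2 volume = 1) ∧
    Filter.Tendsto
      (fun n => eLpNorm (fun x => AopC g ω φ (u n) x - z • u n x) 2 volume)
      Filter.atTop (nhds 0) ∧
    ∀ w : Rn N → ℂ × ℂ, MemLp w 2 volume →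
      Filter.Tendsto (fun n => l2innerC2 (u n) w) Filter.atTop (nhds 0)

/-- The operator D = -Δ + ω acting on complex-valued functions. -/
def Dop (ω : ℝ) (u : Rn N → ℂ) : Rn N → ℂ :=
  fun x => -(lap u x) + (ω : ℂ) * u x

/-- The operator L(ξ) = [[ξ, -D],[D, ξ]]. -/
def Lxi (ω : ℝ) (ξ : ℂ) (u : Rn N → ℂ × ℂ) : Rn N → ℂ × ℂ :=
  fun x => (ξ * (u x).1 - Dop ω (fun y => (u y).2) x,
            Dop ω (fun y => (u y).1) x + ξ * (u x).2)

/-- φ is a weak H¹ solution of -Δφ + ωφ - g(|φ|²)φ = 0. -/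
def WeakH1Sol (ω : ℝ) (g : ℝ → ℝ) (φ : Rn N → ℂ) : Prop :=
  MemLp φ 2 volume ∧ Differentiable ℝ φ ∧ MemLp (fderiv ℝ φ) 2 volume ∧
    ∀ ψ : Rn N → ℂ, ContDiff ℝ (⊤ : ℕ∞) ψ → HasCompactSupport ψ →
      ((∫ x, ∑ i : Fin N,
          fderiv ℝ φ x (EuclideanSpace.single i 1) *
            fderiv ℝ ψ x (EuclideanSpace.single i 1)) +
        (∫ x, (ω : ℂ) * φ x * ψ x) -
        ∫ x, ((g (Complex.normSq (φ x)) : ℝ) : ℂ) * φ x * ψ x) = 0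

end

noncomputable section

/-- The power nonlinearity f(z) = -|z|^{p-1} z on ℝ² ≅ ℂ. -/
def fpow (p : ℝ) : ℂ → ℂ := fun z => -((‖z‖ ^ (p - 1) : ℝ) : ℂ) * z

end

/-!
Write `A = J H` with `H = -Δ + ω + Df(φ)`. Since `f` commutes with rotations, `Df(φ)` is a
symmetric matrix, so `H` is symmetric, while `J` is skew-adjoint with `J² = -1`. Along a sequence
with `(J H - z) uₙ → 0` the numbers `⟪uₙ, H uₙ⟫` are real and `⟪uₙ, J uₙ⟫` imaginary, so
`Re z ≠ 0` forces `⟪uₙ, H uₙ⟫ → 0`. By the subcritical Sobolev embedding the form of `Df(φ)` is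
small outside large balls, so by Rellich's theorem `H` is positive definite modulo a compact form;
if moreover `uₙ ⇀ 0`, then `uₙ → 0` strongly and there is no singular sequence off the imaginary
axis. In the same way, orthonormalizing eigenvectors of infinitely many unstable eigenvalues `zₙ`
gives a sequence `eₙ ⇀ 0` with `⟪eₙ, H eₙ⟫ = 0`, because eigenvectors with eigenvalues in the open
right half-plane span an isotropic subspace of the form of `H`.
-/

section HamiltonianOperators

open Filter Topology

variable {E : Type*} [NormedAddCommGroup E] [InnerProductSpace ℂ E]

/-- Weak convergence to zero of a sequence in an inner product space. -/
def WeaklyNull (v : ℕ → E) : Prop :=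
  ∀ w : E, Tendsto (fun n ↦ inner ℂ w (v n)) atTop (𝓝 0)

theorem weaklyNull_of_orthonormal {e : ℕ → E} (he : Orthonormal ℂ e) : WeaklyNull e := by
  intro w
  have hsq := (he.inner_products_summable w).tendsto_atTop_zero
  rw [tendsto_zero_iff_norm_tendsto_zero]
  simpa only [Function.comp_def, Real.sqrt_zero, Real.sqrt_sq (norm_nonneg _), norm_inner_symm w]
    using (Real.continuous_sqrt.tendsto _).comp hsq

theorem WeaklyNull.exists_norm_le [CompleteSpace E] {v : ℕ → E} (hv : WeaklyNull v) :
    ∃ C, ∀ n, ‖v n‖ ≤ C := by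
  obtain ⟨C, hC⟩ := banach_steinhaus (g := fun n ↦ innerSL ℂ (v n)) fun w ↦ by
    obtain ⟨B, hB⟩ := (hv w).norm.bddAbove_range
    exact ⟨B, fun n ↦ by simpa only [innerSL_apply_apply, norm_inner_symm] using hB ⟨n, rfl⟩⟩
  exact ⟨C, fun n ↦ by simpa only [innerSL_apply_norm] using hC n⟩

/-- A skew-adjoint operator `J` with `J² = -1`, i.e. the symplectic structure of a Hamiltonian
operator `J H`. -/
structure IsSkewComplexStructure (J : E →ₗ[ℂ] E) : Prop where
  inner_left : ∀ x y, inner ℂ (J x) y = -inner ℂ x (J y)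
  apply_apply : ∀ x, J (J x) = -x

/-- The quadratic form of `H` controls the norm up to a term that is continuous for weak
convergence: this is what "positive definite modulo a compact form" means for sequences. -/
def CoerciveModCompact (H : E →ₗ.[ℂ] E) : Prop :=
  ∀ u : ℕ → H.domain, WeaklyNull (fun n ↦ (u n : E)) →
    Tendsto (fun n ↦ (inner ℂ (u n : E) (H (u n))).re) atTop (𝓝 0) →
    Tendsto (fun n ↦ (u n : E)) atTop (𝓝 0)

namespace IsSkewComplexStructure

variable {J : E →ₗ[ℂ] E} (hJ : IsSkewComplexStructure J)
include hJ

theorem inner_apply_apply (x y : E) : inner ℂ (J x) (J y) = inner ℂ x y := by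
  rw [hJ.inner_left, hJ.apply_apply, inner_neg_right, neg_neg]

theorem norm_apply (x : E) : ‖J x‖ = ‖x‖ := by
  rw [@norm_eq_sqrt_re_inner ℂ, @norm_eq_sqrt_re_inner ℂ _ _ _ _ x, hJ.inner_apply_apply]

theorem re_inner_self_apply (x : E) : (inner ℂ x (J x)).re = 0 := by
  have h := congrArg Complex.re (inner_conj_symm (𝕜 := ℂ) x (J x))
  rw [hJ.inner_left, Complex.conj_re, Complex.neg_re] at h
  linarith

end IsSkewComplexStructure

variable {J : E →ₗ[ℂ] E} {H : E →ₗ.[ℂ] E}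

theorem im_inner_self_eq_zero (hH : H.IsFormalAdjoint H) (u : H.domain) :
    (inner ℂ (u : E) (H u)).im = 0 := by
  rw [← Complex.conj_eq_iff_im, inner_conj_symm, hH]

-- With `r` the pairing of `J u` with the residual, `⟪u, H u⟫ = -z ⟪u, J u⟫ + r`. The left side
-- is real and `⟪u, J u⟫` imaginary, so the imaginary part determines `⟪u, J u⟫`.
theorem re_inner_self_eq (hJ : IsSkewComplexStructure J) (hH : H.IsFormalAdjoint H) {z : ℂ}
    (hz : z.re ≠ 0) (u : H.domain) :
    (inner ℂ (u : E) (H u)).re =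
      z.im * z.re⁻¹ * (inner ℂ (J u) (J (H u) - z • (u : E))).im +
        (inner ℂ (J u) (J (H u) - z • (u : E))).re := by
  set r := inner ℂ (J u) (J (H u) - z • (u : E)) with hr
  have hform : inner ℂ (u : E) (H u) = -z * inner ℂ (u : E) (J u) + r := by
    rw [hr, inner_sub_right, inner_smul_right, hJ.inner_apply_apply, hJ.inner_left]
    ring
  have him := im_inner_self_eq_zero hH u
  rw [hform] at him ⊢
  simp only [Complex.add_im, Complex.add_re, Complex.mul_im, Complex.mul_re, Complex.neg_re,
    Complex.neg_im, hJ.re_inner_self_apply, mul_zero, add_zero, zero_sub] at him ⊢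
  field_simp
  linear_combination -z.im * him

theorem re_eq_zero_of_singular_sequence [CompleteSpace E] (hJ : IsSkewComplexStructure J)
    (hH : H.IsFormalAdjoint H) (hc : CoerciveModCompact H) {z : ℂ} {u : ℕ → H.domain}
    (hweak : WeaklyNull fun n ↦ (u n : E)) (hu : ¬ Tendsto (fun n ↦ (u n : E)) atTop (𝓝 0))
    (hres : Tendsto (fun n ↦ J (H (u n)) - z • (u n : E)) atTop (𝓝 0)) : z.re = 0 := by
  by_contra hz
  refine hu (hc u hweak ?_)
  obtain ⟨C, hC⟩ := hweak.exists_norm_le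
  have hr : Tendsto (fun n ↦ inner ℂ (J (u n)) (J (H (u n)) - z • (u n : E))) atTop (𝓝 0) := by
    have hbound : Tendsto (fun n ↦ C * ‖J (H (u n)) - z • (u n : E)‖) atTop (𝓝 0) := by
      simpa only [norm_zero, mul_zero] using hres.norm.const_mul C
    refine squeeze_zero_norm (fun n ↦ ?_) hbound
    refine (norm_inner_le_norm _ _).trans ?_
    rw [hJ.norm_apply]
    exact mul_le_mul_of_nonneg_right (hC n) (norm_nonneg _)
  have hre := (Complex.continuous_re.tendsto _).comp hr
  have him := (Complex.continuous_im.tendsto _).comp hr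
  simpa only [re_inner_self_eq hJ hH hz, Function.comp_def, Complex.zero_re, Complex.zero_im,
    mul_zero, add_zero] using (him.const_mul (z.im * z.re⁻¹)).add hre

theorem inner_eq_zero_of_unstable (hJ : IsSkewComplexStructure J) (hH : H.IsFormalAdjoint H)
    {z w : ℂ} (hz : 0 < z.re) (hw : 0 < w.re) {u v : H.domain} (hu : J (H u) = z • (u : E))
    (hv : J (H v) = w • (v : E)) : inner ℂ (u : E) (H v) = 0 := by
  have happly {ζ : ℂ} {x : H.domain} (hx : J (H x) = ζ • (x : E)) : H x = -(ζ • J x) := by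
    rw [← map_smul, ← hx, hJ.apply_apply, neg_neg]
  have hsum : (starRingEnd ℂ z + w) * inner ℂ (u : E) (J v) = 0 := by
    have h := hH u v
    rw [happly hu, happly hv, inner_neg_left, inner_neg_right, inner_smul_left, inner_smul_right,
      hJ.inner_left] at h
    linear_combination h
  have hne : starRingEnd ℂ z + w ≠ 0 := fun h ↦ by
    have := congrArg Complex.re h
    simp only [Complex.add_re, Complex.conj_re, Complex.zero_re] at this
    linarith
  rw [happly hv, inner_neg_right, inner_smul_right, (mul_eq_zero_iff_left hne).1 hsum, mul_zero,
    neg_zero]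

theorem inner_eq_zero_of_mem_span {s : Set H.domain}
    (hs : ∀ u ∈ s, ∀ v ∈ s, inner ℂ (u : E) (H v) = 0) {u v : H.domain}
    (hu : u ∈ Submodule.span ℂ s) (hv : v ∈ Submodule.span ℂ s) :
    inner ℂ (u : E) (H v) = 0 := by
  induction hu, hv using Submodule.span_induction₂ with
  | mem_mem u v hu hv => exact hs u hu v hv
  | zero_left v _ => exact inner_zero_left _
  | zero_right u _ => rw [LinearPMap.map_zero, inner_zero_right]
  | add_left u v w _ _ _ hu hv => rw [Submodule.coe_add, inner_add_left, hu, hv, add_zero]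
  | add_right u v w _ _ _ hv hw => rw [LinearPMap.map_add, inner_add_right, hv, hw, add_zero]
  | smul_left c u v _ _ h => rw [Submodule.coe_smul, inner_smul_left, h, mul_zero]
  | smul_right c u v _ _ h => rw [LinearPMap.map_smul, inner_smul_right, h, mul_zero]

theorem linearIndependent_of_apply_eq_smul {T : H.domain →ₗ[ℂ] E} {z : ℕ → ℂ}
    (hz : Function.Injective z) {χ : ℕ → H.domain} (hχ : ∀ n, χ n ≠ 0)
    (hT : ∀ n, T (χ n) = z n • (χ n : E)) : LinearIndependent ℂ fun n ↦ (χ n : E) := by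
  obtain ⟨S, hS⟩ := T.exists_extend
  refine Module.End.eigenvectors_linearIndependent' S z hz _ fun n ↦
    ⟨Module.End.mem_eigenspace_iff.2 ?_, by simpa only [ne_eq, Submodule.coe_eq_zero] using hχ n⟩
  rw [← hT, ← hS, LinearMap.comp_apply, Submodule.subtype_apply]

theorem exists_orthonormal_in_span {s : Submodule ℂ E} {χ : ℕ → s}
    (hχ : LinearIndependent ℂ fun n ↦ (χ n : E)) :
    ∃ e : ℕ → s, (∀ n, e n ∈ Submodule.span ℂ (Set.range χ)) ∧
      Orthonormal ℂ fun n ↦ (e n : E) := by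
  have hmem (n : ℕ) : InnerProductSpace.gramSchmidtNormed ℂ (fun n ↦ (χ n : E)) n ∈
      (Submodule.span ℂ (Set.range χ)).map s.subtype := by
    have hspan := (InnerProductSpace.span_gramSchmidtNormed_range _).trans
      (InnerProductSpace.span_gramSchmidt ℂ fun n ↦ (χ n : E))
    rw [Submodule.map_span, ← Set.range_comp, Function.comp_def]
    exact hspan.le (Submodule.subset_span (Set.mem_range_self n))
  choose e he heq using hmem
  refine ⟨e, he, ?_⟩
  have heq' : (fun n ↦ (e n : E)) = _ := funext heq
  exact heq' ▸ InnerProductSpace.gramSchmidtNormed_orthonormal hχ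

theorem finite_unstable_eigenvalues (hJ : IsSkewComplexStructure J) (hH : H.IsFormalAdjoint H)
    (hc : CoerciveModCompact H) :
    {z : ℂ | 0 < z.re ∧ ∃ χ : H.domain, χ ≠ 0 ∧ J (H χ) = z • (χ : E)}.Finite := by
  by_contra hinf
  let z := Set.Infinite.natEmbedding _ hinf
  choose χ hχ0 hχ using fun n ↦ (z n).2.2
  have hli := linearIndependent_of_apply_eq_smul (T := J ∘ₗ H.toFun)
    (Subtype.val_injective.comp z.injective) hχ0 hχ
  obtain ⟨e, he_mem, he⟩ := exists_orthonormal_in_span hli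
  have hisotropic : ∀ u ∈ Set.range χ, ∀ v ∈ Set.range χ, inner ℂ (u : E) (H v) = 0 := by
    rintro _ ⟨j, rfl⟩ _ ⟨k, rfl⟩
    exact inner_eq_zero_of_unstable hJ hH (z j).2.1 (z k).2.1 (hχ j) (hχ k)
  have hlim : Tendsto (fun n ↦ (e n : E)) atTop (𝓝 0) := by
    refine hc e (weaklyNull_of_orthonormal he) ?_
    simp only [fun n ↦ inner_eq_zero_of_mem_span hisotropic (he_mem n) (he_mem n),
      Complex.zero_re, tendsto_const_nhds_iff]
  simpa only [he.1, norm_zero, tendsto_const_nhds_iff, one_ne_zero] using hlim.norm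

end HamiltonianOperators

noncomputable section

section CauchySchwarz

theorem enn_add_sq_le (a b : ℝ≥0∞) : (a + b) ^ 2 ≤ 2 * (a ^ 2 + b ^ 2) := by
  have h := ENNReal.rpow_add_le_mul_rpow_add_rpow a b one_le_two
  norm_num at h
  exact h

theorem sq_lintegral_mul_le {α : Type*} [MeasurableSpace α] (μ : Measure α) {f g : α → ℝ≥0∞}
    (hf : AEMeasurable f μ) (hg : AEMeasurable g μ) :
    (∫⁻ x, f x * g x ∂μ) ^ 2 ≤ (∫⁻ x, f x ^ 2 ∂μ) * ∫⁻ x, g x ^ 2 ∂μ := by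
  have h := ENNReal.lintegral_mul_le_Lp_mul_Lq μ Real.HolderConjugate.two_two hf hg
  simp only [Pi.mul_apply, ENNReal.rpow_two, one_div] at h
  simpa only [mul_pow, ← ENNReal.rpow_two (_ ^ (2⁻¹ : ℝ)), ENNReal.rpow_inv_rpow two_ne_zero]
    using pow_le_pow_left' h 2

theorem eLpNorm_two_sq_eq_lintegral {α F : Type*} [MeasurableSpace α] {μ : Measure α}
    [NormedAddCommGroup F] (f : α → F) : eLpNorm f 2 μ ^ 2 = ∫⁻ x, ‖f x‖ₑ ^ 2 ∂μ := by
  simpa only [NNReal.coe_ofNat, ENNReal.rpow_two, ENNReal.coe_ofNat] using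
    eLpNorm_nnreal_pow_eq_lintegral (f := f) (μ := μ) (two_ne_zero (α := NNReal))

end CauchySchwarz

section Cutoff

variable {E : Type*} [NormedAddCommGroup E] [InnerProductSpace ℝ E] [FiniteDimensional ℝ E]

variable (E) in
theorem exists_cutoff_sequence : ∃ (η : ℕ → E → ℝ) (K : NNReal), (∀ k, ContDiff ℝ 1 (η k)) ∧
    (∀ k, HasCompactSupport (η k)) ∧ (∀ k x, ‖η k x‖ₑ ≤ 1) ∧ (∀ k x, ‖fderiv ℝ (η k) x‖ₑ ≤ K) ∧
    ∀ x, ∀ᶠ k in Filter.atTop, η k x = 1 := by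
  let f : ContDiffBump (0 : E) := ⟨1, 2, one_pos, one_lt_two⟩
  have hf : ContDiff ℝ 1 f := f.contDiff
  obtain ⟨K, hK⟩ := (f.hasCompactSupport.fderiv ℝ).exists_bound_of_continuous
    (hf.continuous_fderiv one_ne_zero)
  refine ⟨fun k x ↦ f (((k : ℝ) + 1)⁻¹ • x), K.toNNReal, fun k ↦ hf.comp (contDiff_const_smul _),
    fun k ↦ f.hasCompactSupport.comp_smul (by positivity), fun k x ↦ ?_, fun k x ↦ ?_,
    fun x ↦ ?_⟩
  · rw [← ofReal_norm, ENNReal.ofReal_le_one, Real.norm_of_nonneg f.nonneg]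
    exact f.le_one
  · have hk : ‖((k : ℝ) + 1)⁻¹‖ ≤ 1 := by
      rw [Real.norm_of_nonneg (by positivity)]
      exact inv_le_one_of_one_le₀ (by linarith [k.cast_nonneg (α := ℝ)])
    rw [fderiv_comp_smul, ← ofReal_norm, norm_smul]
    exact ENNReal.ofReal_le_ofReal <|
      (mul_le_of_le_one_left (norm_nonneg _) hk).trans (hK _)
  · obtain ⟨n, hn⟩ := exists_nat_gt ‖x‖
    filter_upwards [Filter.eventually_ge_atTop n] with k hk
    refine f.one_of_mem_closedBall ?_
    have hnk : (n : ℝ) ≤ k := by exact_mod_cast hk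
    rw [mem_closedBall_zero_iff, norm_smul, Real.norm_of_nonneg (by positivity),
      inv_mul_le_iff₀ (by positivity)]
    change ‖x‖ ≤ (k + 1) * 1
    linarith

end Cutoff

section Sobolev

variable {N : ℕ} {F : Type*} [NormedAddCommGroup F] [InnerProductSpace ℝ F]

/-- The squared `H¹` norm, as an extended nonnegative real. -/
def h1Energy {F : Type*} [NormedAddCommGroup F] [NormedSpace ℝ F] (a : Rn N → F) : ℝ≥0∞ :=
  ∫⁻ x, (‖a x‖ₑ ^ 2 + ‖fderiv ℝ a x‖ₑ ^ 2)

variable (F N) in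
/-- The Sobolev embedding `H¹(ℝᴺ; F) ⊂ Lʳ`, on `C¹` functions. -/
def SobolevEmbedding (r : ℝ) : Prop :=
  ∃ C : NNReal, ∀ a : Rn N → F, ContDiff ℝ 1 a → ∫⁻ x, ‖a x‖ₑ ^ r ≤ C * h1Energy a ^ (r / 2)

theorem lintegral_enorm_sq_le_h1Energy {F : Type*} [NormedAddCommGroup F] [NormedSpace ℝ F]
    (a : Rn N → F) : ∫⁻ x, ‖a x‖ₑ ^ 2 ≤ h1Energy a :=
  lintegral_mono fun _ ↦ le_self_add

theorem lintegral_enorm_fderiv_sq_le_h1Energy {F : Type*} [NormedAddCommGroup F] [NormedSpace ℝ F]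
    (a : Rn N → F) : ∫⁻ x, ‖fderiv ℝ a x‖ₑ ^ 2 ≤ h1Energy a :=
  lintegral_mono fun _ ↦ le_add_self

theorem h1Energy_smul_le {η : Rn N → ℝ} {a : Rn N → F} {K : NNReal} (hη : ContDiff ℝ 1 η)
    (ha : ContDiff ℝ 1 a) (hη1 : ∀ x, ‖η x‖ₑ ≤ 1) (hK : ∀ x, ‖fderiv ℝ η x‖ₑ ≤ K) :
    h1Energy (fun x ↦ η x • a x) ≤ (1 + 2 * (1 + K ^ 2)) * h1Energy a := by
  have hcont := ha.continuous
  have := ha.continuous_fderiv one_ne_zero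
  unfold h1Energy
  rw [← lintegral_const_mul _ (by fun_prop)]
  refine lintegral_mono fun x ↦ ?_
  have hval : ‖η x • a x‖ₑ ≤ ‖a x‖ₑ := by
    rw [enorm_smul]
    exact mul_le_of_le_one_left' (hη1 x)
  have hderiv : ‖fderiv ℝ (fun x ↦ η x • a x) x‖ₑ ≤ ‖fderiv ℝ a x‖ₑ + K * ‖a x‖ₑ := by
    rw [fderiv_fun_smul (hη.differentiable one_ne_zero x) (ha.differentiable one_ne_zero x)]
    refine (enorm_add_le (E := Rn N →L[ℝ] F) _ _).trans (add_le_add ?_ ?_)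
    · rw [enorm_smul]
      exact mul_le_of_le_one_left' (hη1 x)
    · rw [← enorm_norm, ContinuousLinearMap.norm_smulRight_apply, enorm_mul, enorm_norm,
        enorm_norm]
      exact mul_le_mul_left (hK x) _
  calc ‖η x • a x‖ₑ ^ 2 + ‖fderiv ℝ (fun x ↦ η x • a x) x‖ₑ ^ 2
      ≤ ‖a x‖ₑ ^ 2 + (‖fderiv ℝ a x‖ₑ + K * ‖a x‖ₑ) ^ 2 := by gcongr
    _ ≤ ‖a x‖ₑ ^ 2 + 2 * (‖fderiv ℝ a x‖ₑ ^ 2 + (K * ‖a x‖ₑ) ^ 2) := by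
        gcongr; exact enn_add_sq_le _ _
    _ ≤ ‖a x‖ₑ ^ 2 + 2 * (‖fderiv ℝ a x‖ₑ ^ 2 + (K * ‖a x‖ₑ) ^ 2) +
          (2 * ‖a x‖ₑ ^ 2 + (1 + 2 * K ^ 2) * ‖fderiv ℝ a x‖ₑ ^ 2) := le_self_add
    _ = (1 + 2 * (1 + K ^ 2)) * (‖a x‖ₑ ^ 2 + ‖fderiv ℝ a x‖ₑ ^ 2) := by ring

theorem sobolevEmbedding_of_hasCompactSupport {r : ℝ} (hr : 0 ≤ r) {C : NNReal}
    (h : ∀ a : Rn N → F, ContDiff ℝ 1 a → HasCompactSupport a →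
      ∫⁻ x, ‖a x‖ₑ ^ r ≤ C * h1Energy a ^ (r / 2)) : SobolevEmbedding N F r := by
  obtain ⟨η, K, hη, hsupp, hη1, hK, hlim⟩ := exists_cutoff_sequence (Rn N)
  refine ⟨C * (1 + 2 * (1 + K ^ 2)) ^ (r / 2), fun a ha ↦ ?_⟩
  have hcont := ha.continuous
  have hpointwise (x : Rn N) :
      Filter.liminf (fun k ↦ ‖η k x • a x‖ₑ ^ r) Filter.atTop = ‖a x‖ₑ ^ r := by
    refine (tendsto_const_nhds.congr' ?_).liminf_eq
    filter_upwards [hlim x] with k hk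
    rw [hk, one_smul]
  have hbound (k : ℕ) : ∫⁻ x, ‖η k x • a x‖ₑ ^ r ≤
      C * ((1 + 2 * (1 + K ^ 2)) * h1Energy a) ^ (r / 2) := by
    refine (h _ ((hη k).smul ha) (hsupp k).smul_right).trans ?_
    gcongr
    exact h1Energy_smul_le (hη k) ha (hη1 k) (hK k)
  calc ∫⁻ x, ‖a x‖ₑ ^ r = ∫⁻ x, Filter.liminf (fun k ↦ ‖η k x • a x‖ₑ ^ r) Filter.atTop := by
        simp only [hpointwise]
    _ ≤ Filter.liminf (fun k ↦ ∫⁻ x, ‖η k x • a x‖ₑ ^ r) Filter.atTop := by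
        refine lintegral_liminf_le fun k ↦ ?_
        have := ((hη k).continuous.smul hcont).enorm.measurable
        fun_prop
    _ ≤ C * ((1 + 2 * (1 + K ^ 2)) * h1Energy a) ^ (r / 2) :=
        Filter.liminf_le_of_le ⟨0, by simp⟩ fun b hb ↦ by
          obtain ⟨k, hk⟩ := hb.exists
          exact hk.trans (hbound k)
    _ = _ := by
        rw [ENNReal.mul_rpow_of_nonneg _ _ (by positivity), ← mul_assoc, ENNReal.coe_mul,
          ENNReal.coe_rpow_of_nonneg _ (by positivity)]
        push_cast
        rfl

theorem sobolevEmbedding_two : SobolevEmbedding N F 2 :=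
  ⟨1, fun a _ ↦ by
    simpa only [ENNReal.rpow_two, ENNReal.coe_one, one_mul, div_self (two_ne_zero (α := ℝ)),
      ENNReal.rpow_one] using lintegral_enorm_sq_le_h1Energy a⟩

theorem sobolevEmbedding_of_three_le (hN : 3 ≤ N) :
    SobolevEmbedding N F (2 * (N : ℝ) / ((N : ℝ) - 2)) := by
  have hN' : (3 : ℝ) ≤ N := by exact_mod_cast hN
  set r : ℝ := 2 * (N : ℝ) / ((N : ℝ) - 2) with hr
  have hr0 : 0 < r := div_pos (by linarith) (by linarith)
  have hne : (N : ℝ) - 2 ≠ 0 := by linarith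
  have hr_coe : ((r.toNNReal : NNReal) : ℝ) = r := Real.coe_toNNReal _ hr0.le
  have hconj : ((r.toNNReal : NNReal) : ℝ)⁻¹ =
      ((2 : NNReal) : ℝ)⁻¹ - (Module.finrank ℝ (Rn N) : ℝ)⁻¹ := by
    rw [finrank_euclideanSpace_fin, hr_coe, hr]
    push_cast
    field_simp
  set C := eLpNormLESNormFDerivOfEqInnerConst (volume : Measure (Rn N)) 2
  refine sobolevEmbedding_of_hasCompactSupport hr0.le (C := C ^ r) fun a ha hsupp ↦ ?_
  have h := eLpNorm_le_eLpNorm_fderiv_of_eq_inner (volume : Measure (Rn N)) ha hsupp one_le_two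
    (by rw [finrank_euclideanSpace_fin]; omega) hconj
  rw [eLpNorm_nnreal_eq_lintegral (Real.toNNReal_pos.2 hr0).ne',
    eLpNorm_nnreal_eq_lintegral two_ne_zero, hr_coe, one_div,
    ENNReal.rpow_inv_le_iff hr0, ENNReal.mul_rpow_of_nonneg _ _ hr0.le, ← ENNReal.rpow_mul,
    NNReal.coe_ofNat, one_div_mul_eq_div] at h
  refine h.trans ?_
  rw [ENNReal.coe_rpow_of_nonneg _ hr0.le]
  simp only [ENNReal.rpow_two]
  gcongr
  exact lintegral_enorm_fderiv_sq_le_h1Energy a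

theorem enorm_le_lintegral_enorm_fderiv {v : Rn 1 → F} (hv : ContDiff ℝ 1 v)
    (hsupp : HasCompactSupport v) (x : Rn 1) : ‖v x‖ₑ ≤ ∫⁻ y, ‖fderiv ℝ v y‖ₑ := by
  let e : ℝ ≃ₗᵢ[ℝ] Rn 1 := (OrthonormalBasis.singleton (Fin 1) ℝ).repr
  have hderiv (s : ℝ) : ‖deriv (v ∘ e) s‖ₑ ≤ ‖fderiv ℝ v (e s)‖ₑ := by
    have h : HasDerivAt (v ∘ e) (fderiv ℝ v (e s) (e 1)) s :=
      (hv.differentiable one_ne_zero (e s)).hasFDerivAt.comp_hasDerivAt s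
        e.toContinuousLinearEquiv.toContinuousLinearMap.hasDerivAt
    rw [h.deriv]
    refine (ContinuousLinearMap.le_opENorm _ _).trans_eq ?_
    rw [e.enorm_map, enorm_one, mul_one]
  obtain ⟨t, rfl⟩ := e.surjective x
  calc ‖v (e t)‖ₑ ≤ ∫⁻ s in Set.Iic t, ‖deriv (v ∘ e) s‖ₑ :=
        HasCompactSupport.enorm_le_lintegral_Ici_deriv
          (hv.comp e.toContinuousLinearEquiv.contDiff) (hsupp.comp_homeomorph e.toHomeomorph) t
    _ ≤ ∫⁻ s, ‖fderiv ℝ v (e s)‖ₑ := (setLIntegral_le_lintegral _ _).trans (lintegral_mono hderiv)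
    _ = ∫⁻ y, ‖fderiv ℝ v y‖ₑ :=
        e.measurePreserving.lintegral_comp
          (hv.continuous_fderiv one_ne_zero).enorm.measurable

theorem exists_lintegral_sq_le_of_le_two (hN : 1 ≤ N) (hN2 : N ≤ 2) :
    ∃ C : NNReal, ∀ v : Rn N → F, ContDiff ℝ 1 v → HasCompactSupport v →
      ∫⁻ x, ‖v x‖ₑ ^ 2 ≤ C * (∫⁻ x, (‖v x‖ₑ + ‖fderiv ℝ v x‖ₑ)) ^ 2 := by
  obtain rfl | rfl : N = 1 ∨ N = 2 := by omega
  · refine ⟨1, fun v hv hsupp ↦ ?_⟩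
    have hmeas : Measurable fun x ↦ ‖v x‖ₑ := hv.continuous.enorm.measurable
    calc ∫⁻ x, ‖v x‖ₑ ^ 2 ≤ ∫⁻ x, (∫⁻ y, ‖fderiv ℝ v y‖ₑ) * ‖v x‖ₑ :=
          lintegral_mono fun x ↦ by
            simpa only [sq] using mul_le_mul_left (enorm_le_lintegral_enorm_fderiv hv hsupp x) _
      _ = (∫⁻ y, ‖fderiv ℝ v y‖ₑ) * ∫⁻ x, ‖v x‖ₑ := lintegral_const_mul _ hmeas
      _ ≤ _ := by
          rw [ENNReal.coe_one, one_mul, sq, lintegral_add_left hmeas]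
          gcongr
          · exact le_add_self
          · exact le_self_add
  · refine ⟨lintegralPowLePowLIntegralFDerivConst (volume : Measure (Rn 2)) 2, fun v hv hsupp ↦ ?_⟩
    have h := lintegral_pow_le_pow_lintegral_fderiv (volume : Measure (Rn 2)) hv hsupp (p := 2) (by
      rw [finrank_euclideanSpace_fin]
      exact_mod_cast Real.HolderConjugate.two_two)
    simp only [ENNReal.rpow_two] at h
    refine h.trans ?_
    gcongr
    exact le_add_self

theorem lintegral_add_sq_le_h1Energy {a : Rn N → F} (ha : ContDiff ℝ 1 a) :
    ∫⁻ x, (‖a x‖ₑ + ‖fderiv ℝ a x‖ₑ) ^ 2 ≤ 2 * h1Energy a := by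
  have hcont := ha.continuous
  have := ha.continuous_fderiv one_ne_zero
  rw [h1Energy, ← lintegral_const_mul _ (by fun_prop)]
  exact lintegral_mono fun x ↦ enn_add_sq_le _ _

theorem lintegral_norm_rpow_add_fderiv_le {t : NNReal} (ht : 0 < t) {a : Rn N → F}
    (ha : ContDiff ℝ 1 a) :
    ∫⁻ x, (‖‖a x‖ ^ (t + 1 : ℝ)‖ₑ + ‖fderiv ℝ (fun x ↦ ‖a x‖ ^ (t + 1 : ℝ)) x‖ₑ) ≤
      (t + 1 : ℝ≥0∞) * ∫⁻ x, ‖a x‖ₑ ^ (t : ℝ) * (‖a x‖ₑ + ‖fderiv ℝ a x‖ₑ) := by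
  have hcont := ha.continuous
  have := ha.continuous_fderiv one_ne_zero
  rw [← lintegral_const_mul _ (by fun_prop)]
  refine lintegral_mono fun x ↦ ?_
  have hval : ‖‖a x‖ ^ (t + 1 : ℝ)‖ₑ = ‖a x‖ₑ ^ (t : ℝ) * ‖a x‖ₑ := by
    rw [Real.enorm_rpow_of_nonneg (norm_nonneg _) (by positivity), enorm_norm,
      ENNReal.rpow_add_of_nonneg _ _ t.coe_nonneg zero_le_one, ENNReal.rpow_one]
  have hderiv := enorm_fderiv_norm_rpow_le (ha.differentiable one_ne_zero) (x := x)
    (lt_add_of_pos_left 1 ht)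
  simp only [NNReal.coe_add, NNReal.coe_one, add_sub_cancel_right, ENNReal.coe_add,
    ENNReal.coe_one] at hderiv
  rw [hval, mul_add, mul_add, ← mul_assoc _ (‖a x‖ₑ ^ (t : ℝ)) ‖fderiv ℝ a x‖ₑ]
  exact add_le_add (le_mul_of_one_le_left' le_add_self) hderiv

-- In dimension at most two `W^{1,1}` embeds into `L²`; applied to `‖a‖^(t+1)`, this trades
-- integrability of `a` for two more powers.
theorem SobolevEmbedding.add_one_of_le_two (hN : 1 ≤ N) (hN2 : N ≤ 2) {t : NNReal} (ht : 0 < t)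
    (h : SobolevEmbedding N F (2 * t)) : SobolevEmbedding N F (2 * (t + 1)) := by
  obtain ⟨C₀, hC₀⟩ := exists_lintegral_sq_le_of_le_two (F := ℝ) hN hN2
  obtain ⟨C, hC⟩ := h
  have ht1 : (1 : ℝ) < t + 1 := lt_add_of_pos_left 1 ht
  refine sobolevEmbedding_of_hasCompactSupport (C := C₀ * ((t + 1) ^ 2 * (C * 2))) (by positivity)
    fun a ha hsupp ↦ ?_
  have hcont := ha.continuous
  have := ha.continuous_fderiv one_ne_zero
  have hzero : ‖(0 : F)‖ ^ (t + 1 : ℝ) = 0 := by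
    rw [norm_zero, Real.zero_rpow (by positivity)]
  calc ∫⁻ x, ‖a x‖ₑ ^ (2 * (t + 1 : ℝ)) = ∫⁻ x, ‖‖a x‖ ^ (t + 1 : ℝ)‖ₑ ^ 2 := by
        refine lintegral_congr fun x ↦ ?_
        rw [Real.enorm_rpow_of_nonneg (norm_nonneg _) (by positivity), enorm_norm,
          ← ENNReal.rpow_two, ← ENNReal.rpow_mul, mul_comm]
    _ ≤ C₀ * (∫⁻ x, (‖‖a x‖ ^ (t + 1 : ℝ)‖ₑ +
          ‖fderiv ℝ (fun x ↦ ‖a x‖ ^ (t + 1 : ℝ)) x‖ₑ)) ^ 2 :=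
        hC₀ _ (ha.norm_rpow ht1) (hsupp.comp_left (g := fun z : F ↦ ‖z‖ ^ (t + 1 : ℝ)) hzero)
    _ ≤ C₀ * ((t + 1 : ℝ≥0∞) *
          ∫⁻ x, ‖a x‖ₑ ^ (t : ℝ) * (‖a x‖ₑ + ‖fderiv ℝ a x‖ₑ)) ^ 2 := by
        gcongr
        exact lintegral_norm_rpow_add_fderiv_le ht ha
    _ ≤ C₀ * ((t + 1 : ℝ≥0∞) ^ 2 * ((∫⁻ x, (‖a x‖ₑ ^ (t : ℝ)) ^ 2) *
          ∫⁻ x, (‖a x‖ₑ + ‖fderiv ℝ a x‖ₑ) ^ 2)) := by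
        rw [mul_pow]
        gcongr
        exact sq_lintegral_mul_le _ (by fun_prop) (by fun_prop)
    _ ≤ C₀ * ((t + 1 : ℝ≥0∞) ^ 2 * ((C * h1Energy a ^ (t : ℝ)) * (2 * h1Energy a))) := by
        gcongr
        · refine (lintegral_congr fun x ↦ ?_).trans_le ((hC a ha).trans_eq ?_)
          · rw [← ENNReal.rpow_two, ← ENNReal.rpow_mul, mul_comm]
          · rw [mul_div_cancel_left₀ _ two_ne_zero]
        · exact lintegral_add_sq_le_h1Energy ha
    _ = _ := by
        rw [mul_div_cancel_left₀ _ two_ne_zero,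
          ENNReal.rpow_add_of_nonneg _ _ t.coe_nonneg zero_le_one, ENNReal.rpow_one]
        push_cast
        ring

theorem sobolevEmbedding_two_mul_of_le_two (hN : 1 ≤ N) (hN2 : N ≤ 2) (m : ℕ) :
    SobolevEmbedding N F (2 * (m + 1)) := by
  induction m with
  | zero => simpa using sobolevEmbedding_two
  | succ m ih =>
    simpa using SobolevEmbedding.add_one_of_le_two hN hN2 (t := m + 1) (by positivity)
      (by simpa using ih)

theorem exists_sobolevEmbedding_of_subcrit (hN : 1 ≤ N) {p : ℝ} (hp : Subcrit N p) :
    ∃ r : ℝ, 2 < r ∧ p + 1 ≤ r ∧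
      ∀ (F : Type) [NormedAddCommGroup F] [InnerProductSpace ℝ F], SobolevEmbedding N F r := by
  obtain ⟨hp1, hp2⟩ := hp
  by_cases h3 : 3 ≤ N
  · have hN' : (3 : ℝ) ≤ N := by exact_mod_cast h3
    refine ⟨_, ?_, by linarith [hp2 h3], fun F _ _ ↦ sobolevEmbedding_of_three_le h3⟩
    rw [lt_div_iff₀] <;> linarith
  · obtain ⟨m, hm⟩ := exists_nat_gt (p + 1)
    exact ⟨2 * (m + 1), by linarith, by linarith,
      fun F _ _ ↦ sobolevEmbedding_two_mul_of_le_two hN (by omega) m⟩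

end Sobolev
end

section PotentialDecay

variable {N : ℕ} {F G L : Type*} [NormedAddCommGroup F] [InnerProductSpace ℝ F]
  [NormedAddCommGroup G] [NormedAddCommGroup L]

/-- The multiplication form `∫ ‖V‖ ‖a‖²` is small at infinity relative to the `H¹` norm. Only the
size of `V` matters, so `V` may take values in any normed group. -/
def VanishesAtInfinityAsForm (F : Type*) [NormedAddCommGroup F] [NormedSpace ℝ F]
    (V : Rn N → L) : Prop :=
  ∀ ε : NNReal, 0 < ε → ∃ R : ℝ, ∀ a : Rn N → F, ContDiff ℝ 1 a →
    ∫⁻ x in (Metric.closedBall 0 R)ᶜ, ‖V x‖ₑ * ‖a x‖ₑ ^ 2 ≤ ε * h1Energy a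

theorem tendsto_setLIntegral_compl_closedBall {f : Rn N → ℝ≥0∞} (hf : ∫⁻ x, f x ≠ ∞) :
    Filter.Tendsto (fun R : ℝ ↦ ∫⁻ x in (Metric.closedBall 0 R)ᶜ, f x) Filter.atTop (nhds 0) := by
  have : IsFiniteMeasure (volume.withDensity f) := isFiniteMeasure_withDensity hf
  have h := isTightMeasureSet_iff_tendsto_measure_norm_gt.1
    (isTightMeasureSet_singleton (μ := volume.withDensity f))
  simp only [Set.mem_singleton_iff, iSup_iSup_eq_left] at h
  refine h.congr fun R ↦ ?_
  rw [← withDensity_apply _ Metric.isClosed_closedBall.measurableSet.compl]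
  congr 1
  ext x
  simp only [Set.mem_ofPred_eq, Set.mem_compl_iff, mem_closedBall_zero_iff, not_le]

theorem lintegral_rpow_mul_sq_le {α : Type*} [MeasurableSpace α] (μ : Measure α)
    {f g : α → ℝ≥0∞} (hf : AEMeasurable f μ) (hg : AEMeasurable g μ) {r : ℝ} (hr : 2 < r) :
    ∫⁻ x, f x ^ (r - 2) * g x ^ 2 ∂μ ≤
      (∫⁻ x, f x ^ r ∂μ) ^ ((r - 2) / r) * (∫⁻ x, g x ^ r ∂μ) ^ (2 / r) := by
  have hr0 : r ≠ 0 := by linarith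
  have hr2 : r - 2 ≠ 0 := by linarith
  have hconj : Real.HolderConjugate (r / (r - 2)) (r / 2) := by
    refine Real.holderConjugate_iff.2 ⟨by rw [lt_div_iff₀] <;> linarith, ?_⟩
    field_simp
    ring
  have h := ENNReal.lintegral_mul_le_Lp_mul_Lq μ hconj (hf.pow_const (r - 2)) (hg.pow_const 2)
  simpa only [Pi.mul_apply, one_div_div, ← ENNReal.rpow_two, ← ENNReal.rpow_mul,
    mul_div_cancel₀ _ hr2, mul_div_cancel₀ _ (two_ne_zero (α := ℝ))] using h

theorem setLIntegral_rpow_mul_sq_le_h1Energy {a : Rn N → F} {f : Rn N → ℝ≥0∞} {r : ℝ}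
    {C : NNReal} (hr : 2 < r) (ha : Continuous a)
    (hC : ∫⁻ x, ‖a x‖ₑ ^ r ≤ C * h1Energy a ^ (r / 2)) (hf : AEMeasurable f) (s : Set (Rn N)) :
    ∫⁻ x in s, f x ^ (r - 2) * ‖a x‖ₑ ^ 2 ≤
      (∫⁻ x in s, f x ^ r) ^ ((r - 2) / r) * (C ^ (2 / r) * h1Energy a) := by
  have hr0 : 0 < r := by linarith
  have hSobolev : (∫⁻ x in s, ‖a x‖ₑ ^ r) ^ (2 / r) ≤ C ^ (2 / r) * h1Energy a :=
    calc (∫⁻ x in s, ‖a x‖ₑ ^ r) ^ (2 / r) ≤ (C * h1Energy a ^ (r / 2)) ^ (2 / r) := by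
          gcongr
          exact (setLIntegral_le_lintegral _ _).trans hC
      _ = C ^ (2 / r) * h1Energy a := by
          rw [ENNReal.mul_rpow_of_nonneg _ _ (by positivity), ← ENNReal.rpow_mul,
            div_mul_div_cancel₀ two_ne_zero, div_self hr0.ne', ENNReal.rpow_one]
  exact (lintegral_rpow_mul_sq_le _ hf.restrict ha.enorm.measurable.aemeasurable hr).trans
    (by gcongr)

theorem vanishesAtInfinityAsForm_of_le_add_rpow {V : Rn N → L} {φ : Rn N → G} {r : ℝ}
    (hr : 2 < r) (hF : SobolevEmbedding N F r) (hφ : Continuous φ) (hfin : ∫⁻ x, ‖φ x‖ₑ ^ r ≠ ∞)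
    (hV : ∀ ε : NNReal, 0 < ε → ∃ K : NNReal, ∀ x, ‖V x‖₊ ≤ ε + K * ‖φ x‖₊ ^ (r - 2)) :
    VanishesAtInfinityAsForm F V := by
  intro ε hε
  obtain ⟨K, hK⟩ := hV (ε / 2) (half_pos hε)
  obtain ⟨C, hC⟩ := hF
  have hr0 : 0 < r := by linarith
  have hlim : Filter.Tendsto (fun R : ℝ ↦ (K * C ^ (2 / r) : ℝ≥0∞) *
      (∫⁻ x in (Metric.closedBall 0 R)ᶜ, ‖φ x‖ₑ ^ r) ^ ((r - 2) / r)) Filter.atTop (nhds 0) := by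
    have h := (ENNReal.continuous_rpow_const (y := (r - 2) / r)).tendsto 0 |>.comp
      (tendsto_setLIntegral_compl_closedBall hfin)
    rw [ENNReal.zero_rpow_of_pos (div_pos (by linarith) hr0)] at h
    rw [← mul_zero (K * C ^ (2 / r) : ℝ≥0∞)]
    exact ENNReal.Tendsto.const_mul h (Or.inr (ENNReal.mul_ne_top coe_ne_top
      (ENNReal.rpow_ne_top_of_nonneg (by positivity) coe_ne_top)))
  obtain ⟨R, hR⟩ := (hlim.eventually_le_const
    (ENNReal.coe_pos.2 (half_pos hε))).exists
  refine ⟨R, fun a ha ↦ ?_⟩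
  have hameas : Measurable fun x ↦ ‖a x‖ₑ := ha.continuous.enorm.measurable
  have hφmeas : Measurable fun x ↦ ‖φ x‖ₑ := hφ.enorm.measurable
  set S := (Metric.closedBall (0 : Rn N) R)ᶜ
  have hpointwise (x : Rn N) : ‖V x‖ₑ ≤ (ε / 2 : NNReal) + K * ‖φ x‖ₑ ^ (r - 2) := by
    have h := ENNReal.coe_le_coe.2 (hK x)
    rwa [ENNReal.coe_add, ENNReal.coe_mul, ENNReal.coe_rpow_of_nonneg _ (by linarith)] at h
  calc ∫⁻ x in S, ‖V x‖ₑ * ‖a x‖ₑ ^ 2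
      ≤ ∫⁻ x in S, ((ε / 2 : NNReal) * ‖a x‖ₑ ^ 2 + K * (‖φ x‖ₑ ^ (r - 2) * ‖a x‖ₑ ^ 2)) := by
        refine lintegral_mono fun x ↦ ?_
        rw [← mul_assoc, ← add_mul]
        exact mul_le_mul_left (hpointwise x) _
    _ = (ε / 2 : NNReal) * (∫⁻ x in S, ‖a x‖ₑ ^ 2) +
          K * ∫⁻ x in S, ‖φ x‖ₑ ^ (r - 2) * ‖a x‖ₑ ^ 2 := by
        rw [lintegral_add_left (by fun_prop), lintegral_const_mul _ (by fun_prop),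
          lintegral_const_mul _ (by fun_prop)]
    _ ≤ (ε / 2 : NNReal) * h1Energy a + K * ((∫⁻ x in S, ‖φ x‖ₑ ^ r) ^ ((r - 2) / r) *
          (C ^ (2 / r) * h1Energy a)) := by
        gcongr
        · exact (setLIntegral_le_lintegral _ _).trans (lintegral_enorm_sq_le_h1Energy a)
        · exact setLIntegral_rpow_mul_sq_le_h1Energy hr ha.continuous (hC a ha)
            hφmeas.aemeasurable S
    _ = ((ε / 2 : NNReal) +
          (K * C ^ (2 / r) : ℝ≥0∞) * (∫⁻ x in S, ‖φ x‖ₑ ^ r) ^ ((r - 2) / r)) * h1Energy a := by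
        ring
    _ ≤ ((ε / 2 : NNReal) + (ε / 2 : NNReal)) * h1Energy a := by gcongr
    _ = ε * h1Energy a := by rw [← ENNReal.coe_add, add_halves]

theorem exists_nnnorm_le_add_mul_rpow {D : G → L} (hD : ContinuousAt D 0) (hD0 : D 0 = 0)
    {C q s : ℝ} (hgrowth : ∀ z, ‖D z‖ ≤ C * (1 + ‖z‖ ^ q)) (hq : 0 ≤ q) (hqs : q ≤ s)
    {ε : NNReal} (hε : 0 < ε) : ∃ K : NNReal, ∀ z, ‖D z‖₊ ≤ ε + K * ‖z‖₊ ^ s := by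
  obtain ⟨δ, hδ, hsmall⟩ := Metric.continuousAt_iff.1 hD ε hε
  refine ⟨(|C| * (2 * (δ ^ s)⁻¹ + 1)).toNNReal, fun z ↦ ?_⟩
  rw [← NNReal.coe_le_coe]
  push_cast
  rw [Real.coe_toNNReal _ (by positivity)]
  rcases lt_or_ge ‖z‖ δ with hz | hz
  · have h := hsmall (by simpa only [dist_zero_right] using hz)
    rw [hD0, dist_zero_right] at h
    exact h.le.trans (le_add_of_nonneg_right (by positivity))
  · have hone : 1 ≤ (δ ^ s)⁻¹ * ‖z‖ ^ s := by
      rw [inv_mul_eq_div, ← Real.div_rpow (norm_nonneg _) hδ.le]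
      exact Real.one_le_rpow ((one_le_div hδ).2 hz) (hq.trans hqs)
    have hrpow : ‖z‖ ^ q ≤ 1 + ‖z‖ ^ s := by
      rcases le_total ‖z‖ 1 with h1 | h1
      · exact (Real.rpow_le_one (norm_nonneg _) h1 hq).trans
          (le_add_of_nonneg_right (by positivity))
      · exact (Real.rpow_le_rpow_of_exponent_le h1 hqs).trans (le_add_of_nonneg_left zero_le_one)
    calc ‖D z‖ ≤ |C| * (1 + ‖z‖ ^ q) :=
          (hgrowth z).trans (mul_le_mul_of_nonneg_right (le_abs_self C) (by positivity))
      _ ≤ |C| * (2 * (δ ^ s)⁻¹ + 1) * ‖z‖ ^ s := by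
          rw [mul_assoc]
          gcongr
          linarith
      _ ≤ _ := le_add_of_nonneg_left ε.coe_nonneg

end PotentialDecay

section LocalCompactness

section Averaging

variable {E F : Type*} [NormedAddCommGroup E] [NormedAddCommGroup F] [NormedSpace ℝ F]
  [CompleteSpace F]

theorem enorm_sq_le_enorm_integral_translate_sq_add [MeasurableSpace E]
    [BorelSpace E] {ν : Measure E}
    [IsProbabilityMeasure ν] {a : E → F} (ha : Continuous a) {x : E}
    (hint : Integrable (fun y ↦ a (x + y)) ν) :
    ‖a x‖ₑ ^ 2 ≤
      2 * (‖∫ y, a (x + y) ∂ν‖ₑ ^ 2 + ∫⁻ y, ‖a (x + y) - a x‖ₑ ^ 2 ∂ν) := by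
  have hsplit : a x = (∫ y, a (x + y) ∂ν) - ∫ y, (a (x + y) - a x) ∂ν := by
    rw [integral_sub hint (integrable_const _), integral_const, probReal_univ, one_smul]
    abel
  have hjensen : ‖∫ y, (a (x + y) - a x) ∂ν‖ₑ ^ 2 ≤ ∫⁻ y, ‖a (x + y) - a x‖ₑ ^ 2 ∂ν :=
    calc ‖∫ y, (a (x + y) - a x) ∂ν‖ₑ ^ 2 ≤ (∫⁻ y, 1 * ‖a (x + y) - a x‖ₑ ∂ν) ^ 2 := by
          simp only [one_mul]
          gcongr
          exact enorm_integral_le_lintegral_enorm _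
      _ ≤ (∫⁻ _, 1 ^ 2 ∂ν) * ∫⁻ y, ‖a (x + y) - a x‖ₑ ^ 2 ∂ν :=
          sq_lintegral_mul_le _ (by fun_prop)
            (by fun_prop : Continuous fun y ↦ ‖a (x + y) - a x‖ₑ).measurable.aemeasurable
      _ = ∫⁻ y, ‖a (x + y) - a x‖ₑ ^ 2 ∂ν := by
          rw [one_pow, lintegral_one, measure_univ, one_mul]
  calc ‖a x‖ₑ ^ 2
      ≤ (‖∫ y, a (x + y) ∂ν‖ₑ + ‖∫ y, (a (x + y) - a x) ∂ν‖ₑ) ^ 2 := by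
        conv_lhs => rw [hsplit]
        gcongr
        exact enorm_sub_le
    _ ≤ 2 * (‖∫ y, a (x + y) ∂ν‖ₑ ^ 2 + ‖∫ y, (a (x + y) - a x) ∂ν‖ₑ ^ 2) :=
        enn_add_sq_le _ _
    _ ≤ _ := by gcongr

variable [NormedSpace ℝ E]

theorem enorm_sub_sq_le_lintegral_fderiv {a : E → F} (ha : ContDiff ℝ 1 a)
    (x y : E) : ‖a (x + y) - a x‖ₑ ^ 2 ≤
      ‖y‖ₑ ^ 2 * ∫⁻ t in Set.Ioc (0 : ℝ) 1, ‖fderiv ℝ a (x + t • y)‖ₑ ^ 2 := by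
  have := ha.continuous_fderiv one_ne_zero
  have hderiv (t : ℝ) : HasDerivAt (fun t : ℝ ↦ a (x + t • y)) (fderiv ℝ a (x + t • y) y) t :=
    (ha.differentiable one_ne_zero _).hasFDerivAt.comp_hasDerivAt t
      (by simpa using ((hasDerivAt_id t).smul_const y).const_add x)
  have hftc : ∫ t in (0 : ℝ)..1, fderiv ℝ a (x + t • y) y = a (x + y) - a x := by
    rw [intervalIntegral.integral_eq_sub_of_hasDerivAt (fun t _ ↦ hderiv t)
      (Continuous.intervalIntegrable (by fun_prop) _ _), one_smul, zero_smul, add_zero]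
  rw [← hftc, intervalIntegral.integral_of_le zero_le_one]
  calc ‖∫ t in Set.Ioc (0 : ℝ) 1, fderiv ℝ a (x + t • y) y‖ₑ ^ 2
      ≤ (∫⁻ t in Set.Ioc (0 : ℝ) 1, ‖y‖ₑ * ‖fderiv ℝ a (x + t • y)‖ₑ) ^ 2 := by
        gcongr
        refine (enorm_integral_le_lintegral_enorm _).trans (lintegral_mono fun t ↦ ?_)
        rw [mul_comm]
        exact ContinuousLinearMap.le_opENorm _ _
    _ ≤ (∫⁻ _ in Set.Ioc (0 : ℝ) 1, ‖y‖ₑ ^ 2) *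
          ∫⁻ t in Set.Ioc (0 : ℝ) 1, ‖fderiv ℝ a (x + t • y)‖ₑ ^ 2 :=
        sq_lintegral_mul_le _ (by fun_prop) (by fun_prop)
    _ = _ := by
        rw [setLIntegral_const, Real.volume_Ioc, sub_zero, ENNReal.ofReal_one, mul_one]

variable [FiniteDimensional ℝ E] [MeasurableSpace E] [BorelSpace E]

theorem lintegral_enorm_sub_translate_sq_le (μ : Measure E) [μ.IsAddHaarMeasure] {a : E → F}
    (ha : ContDiff ℝ 1 a) (y : E) :
    ∫⁻ x, ‖a (x + y) - a x‖ₑ ^ 2 ∂μ ≤ ‖y‖ₑ ^ 2 * ∫⁻ x, ‖fderiv ℝ a x‖ₑ ^ 2 ∂μ := by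
  have := ha.continuous_fderiv one_ne_zero
  have hmeas : Measurable (Function.uncurry fun (x : E) (t : ℝ) ↦
      ‖fderiv ℝ a (x + t • y)‖ₑ ^ 2) :=
    Continuous.measurable (by unfold Function.uncurry; fun_prop)
  calc ∫⁻ x, ‖a (x + y) - a x‖ₑ ^ 2 ∂μ
      ≤ ∫⁻ x, ‖y‖ₑ ^ 2 * (∫⁻ t in Set.Ioc (0 : ℝ) 1, ‖fderiv ℝ a (x + t • y)‖ₑ ^ 2) ∂μ :=
        lintegral_mono fun x ↦ enorm_sub_sq_le_lintegral_fderiv ha x y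
    _ = ‖y‖ₑ ^ 2 * ∫⁻ t in Set.Ioc (0 : ℝ) 1, (∫⁻ x, ‖fderiv ℝ a (x + t • y)‖ₑ ^ 2 ∂μ) := by
        rw [lintegral_const_mul' _ _ (by finiteness), lintegral_lintegral_swap hmeas.aemeasurable]
    _ = ‖y‖ₑ ^ 2 * ∫⁻ _ in Set.Ioc (0 : ℝ) 1, (∫⁻ x, ‖fderiv ℝ a x‖ₑ ^ 2 ∂μ) := by
        simp only [lintegral_add_right_eq_self (fun x ↦ ‖fderiv ℝ a x‖ₑ ^ 2)]
    _ = _ := by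
        rw [setLIntegral_const, Real.volume_Ioc, sub_zero, ENNReal.ofReal_one, mul_one]

theorem setLIntegral_enorm_sq_le_integral_translate (μ : Measure E)
    [μ.IsAddHaarMeasure] {ν : Measure E}
    [IsProbabilityMeasure ν] {δ : ℝ≥0∞} (hδ : ∀ᵐ y ∂ν, ‖y‖ₑ ≤ δ) {a : E → F}
    (ha : ContDiff ℝ 1 a) (hint : ∀ x, Integrable (fun y ↦ a (x + y)) ν) (s : Set E) :
    ∫⁻ x in s, ‖a x‖ₑ ^ 2 ∂μ ≤ 2 * ((∫⁻ x in s, ‖∫ y, a (x + y) ∂ν‖ₑ ^ 2 ∂μ) +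
      δ ^ 2 * ∫⁻ x, ‖fderiv ℝ a x‖ₑ ^ 2 ∂μ) := by
  have hcont := ha.continuous
  have hmeas : Measurable (Function.uncurry fun x y : E ↦ ‖a (x + y) - a x‖ₑ ^ 2) :=
    Continuous.measurable (by unfold Function.uncurry; fun_prop)
  calc ∫⁻ x in s, ‖a x‖ₑ ^ 2 ∂μ
      ≤ ∫⁻ x in s, 2 * (‖∫ y, a (x + y) ∂ν‖ₑ ^ 2 + ∫⁻ y, ‖a (x + y) - a x‖ₑ ^ 2 ∂ν) ∂μ :=
        lintegral_mono fun x ↦ enorm_sq_le_enorm_integral_translate_sq_add hcont (hint x)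
    _ = 2 * ((∫⁻ x in s, ‖∫ y, a (x + y) ∂ν‖ₑ ^ 2 ∂μ) +
          ∫⁻ x in s, ∫⁻ y, ‖a (x + y) - a x‖ₑ ^ 2 ∂ν ∂μ) := by
        rw [lintegral_const_mul' _ _ ofNat_ne_top,
          lintegral_add_right _ hmeas.lintegral_prod_right]
    _ ≤ 2 * ((∫⁻ x in s, ‖∫ y, a (x + y) ∂ν‖ₑ ^ 2 ∂μ) +
          ∫⁻ y, ∫⁻ x, ‖a (x + y) - a x‖ₑ ^ 2 ∂μ ∂ν) := by
        rw [lintegral_lintegral_swap hmeas.aemeasurable]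
        gcongr 2 * (_ + ?_)
        exact lintegral_mono fun y ↦ setLIntegral_le_lintegral _ _
    _ ≤ 2 * ((∫⁻ x in s, ‖∫ y, a (x + y) ∂ν‖ₑ ^ 2 ∂μ) +
          ∫⁻ _, δ ^ 2 * ∫⁻ x, ‖fderiv ℝ a x‖ₑ ^ 2 ∂μ ∂ν) := by
        gcongr 2 * (_ + ?_)
        refine lintegral_mono_ae (hδ.mono fun y hy ↦ ?_)
        exact (lintegral_enorm_sub_translate_sq_le μ ha y).trans (by gcongr)
    _ = _ := by rw [lintegral_const, measure_univ, mul_one]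

theorem setLIntegral_enorm_sq_le_setIntegral_translate (μ : Measure E) [μ.IsAddHaarMeasure]
    {δ : NNReal} (hδ : 0 < δ) {a : E → F} (ha : ContDiff ℝ 1 a) (s : Set E) :
    ∫⁻ x in s, ‖a x‖ₑ ^ 2 ∂μ ≤ 2 * (‖(μ.real (Metric.ball 0 δ))⁻¹‖ₑ ^ 2 *
      (∫⁻ x in s, ‖∫ y in Metric.ball 0 (δ : ℝ), a (x + y) ∂μ‖ₑ ^ 2 ∂μ) +
        δ ^ 2 * ∫⁻ x, ‖fderiv ℝ a x‖ₑ ^ 2 ∂μ) := by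
  set ν := ProbabilityTheory.cond μ (Metric.ball 0 (δ : ℝ)) with hν
  have hpos : μ (Metric.ball (0 : E) δ) ≠ 0 := (Metric.measure_ball_pos μ 0 hδ).ne'
  have : IsProbabilityMeasure ν :=
    ProbabilityTheory.cond_isProbabilityMeasure_of_finite hpos measure_ball_lt_top.ne
  have hsupp : ∀ᵐ y ∂ν, ‖y‖ₑ ≤ δ := by
    refine Measure.ae_smul_measure ?_ _
    filter_upwards [ae_restrict_mem measurableSet_ball] with y hy
    exact ENNReal.coe_le_coe.2 (mem_ball_zero_iff.1 hy).le
  have hint (x : E) : Integrable (fun y ↦ a (x + y)) ν :=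
    have hcont : Continuous fun y ↦ a (x + y) := ha.continuous.comp (continuous_const_add x)
    ((hcont.continuousOn.integrableOn_compact (isCompact_closedBall 0 (δ : ℝ))).mono_set
      Metric.ball_subset_closedBall).smul_measure (ENNReal.inv_ne_top.2 hpos)
  refine (setLIntegral_enorm_sq_le_integral_translate μ hsupp ha hint s).trans_eq ?_
  simp only [hν, ProbabilityTheory.cond, integral_smul_measure, enorm_smul, mul_pow]
  rw [lintegral_const_mul' _ _ (by finiteness), ENNReal.toReal_inv, measureReal_def]

end Averaging

section Rellich

open Filter Topology

variable {E F : Type*} [NormedAddCommGroup F] [InnerProductSpace ℂ F] [FiniteDimensional ℂ F]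

theorem WeaklyNull.tendsto_zero {v : ℕ → F} (hv : WeaklyNull v) : Tendsto v atTop (𝓝 0) := by
  let e := stdOrthonormalBasis ℂ F
  have h : Tendsto (fun n ↦ ∑ i, inner ℂ (e i) (v n) • e i) atTop (𝓝 (∑ i, (0 : ℂ) • e i)) :=
    tendsto_finsetSum _ fun i _ ↦ (hv (e i)).smul_const _
  simpa only [e.sum_repr', zero_smul, Finset.sum_const_zero] using h

theorem WeaklyNull.tendsto_setIntegral {α : Type*} [MeasurableSpace α] {μ : Measure α}
    {v : ℕ → Lp F 2 μ} (hv : WeaklyNull v) {s : Set α} (hs : MeasurableSet s) (hμs : μ s ≠ ∞) :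
    Tendsto (fun n ↦ ∫ x in s, v n x ∂μ) atTop (𝓝 0) :=
  have := FiniteDimensional.complete ℂ F
  WeaklyNull.tendsto_zero fun w ↦ by
    simpa only [L2.inner_indicatorConstLp_eq_inner_setIntegral] using
      hv (indicatorConstLp 2 hs hμs w)

theorem enorm_setIntegral_sq_le {α G : Type*} [MeasurableSpace α] {μ : Measure α}
    [NormedAddCommGroup G] [NormedSpace ℝ G] (f : Lp G 2 μ) (s : Set α) :
    ‖∫ x in s, f x ∂μ‖ₑ ^ 2 ≤ μ s * ‖f‖ₑ ^ 2 :=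
  calc ‖∫ x in s, f x ∂μ‖ₑ ^ 2 ≤ (∫⁻ x in s, 1 * ‖f x‖ₑ ∂μ) ^ 2 := by
        simp only [one_mul]
        gcongr
        exact enorm_integral_le_lintegral_enorm _
    _ ≤ (∫⁻ _ in s, 1 ^ 2 ∂μ) * ∫⁻ x in s, ‖f x‖ₑ ^ 2 ∂μ :=
        sq_lintegral_mul_le _ (by fun_prop) (Lp.aestronglyMeasurable f).enorm.restrict
    _ ≤ μ s * ‖f‖ₑ ^ 2 := by
        rw [one_pow, setLIntegral_one, Lp.enorm_def, eLpNorm_two_sq_eq_lintegral]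
        exact mul_le_mul_right (setLIntegral_le_lintegral _ _) _

theorem setIntegral_ball_zero_translate {E G : Type*} [NormedAddCommGroup E]
    [MeasurableSpace E] [BorelSpace E] {μ : Measure E} [μ.IsAddLeftInvariant]
    [NormedAddCommGroup G] [NormedSpace ℝ G] (f : E → G) (x : E) (δ : ℝ) :
    ∫ y in Metric.ball 0 δ, f (x + y) ∂μ = ∫ y in Metric.ball x δ, f y ∂μ := by
  rw [← (measurePreserving_add_left μ x).setIntegral_preimage_emb
    (measurableEmbedding_addLeft x) f, preimage_add_ball, sub_self]

variable [NormedAddCommGroup E] [NormedSpace ℝ E] [FiniteDimensional ℝ E]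
  [MeasurableSpace E] [BorelSpace E] {μ : Measure E} [μ.IsAddHaarMeasure]

theorem WeaklyNull.tendsto_lintegral_setIntegral_translate {v : ℕ → Lp F 2 μ}
    (hv : WeaklyNull v) {s : Set E} (hs : μ s ≠ ∞) (δ : ℝ) :
    Tendsto (fun n ↦ ∫⁻ x in s, ‖∫ y in Metric.ball 0 δ, v n (x + y) ∂μ‖ₑ ^ 2 ∂μ)
      atTop (𝓝 0) := by
  have := FiniteDimensional.complete ℂ F
  obtain ⟨C, hC⟩ := hv.exists_norm_le
  rw [← lintegral_zero (μ := μ.restrict s)]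
  refine tendsto_lintegral_of_dominated_convergence
    (fun _ ↦ μ (Metric.ball 0 δ) * ENNReal.ofReal C ^ 2) (fun n ↦ ?_) (fun n ↦ ?_) ?_ ?_
  · have hmeas : StronglyMeasurable (Function.uncurry fun x y : E ↦ v n (x + y)) :=
      (Lp.stronglyMeasurable (v n)).comp_measurable measurable_add
    exact hmeas.integral_prod_right.enorm.pow_const 2
  · refine ae_of_all _ fun x ↦ ?_
    simp only []
    rw [setIntegral_ball_zero_translate, ← Measure.addHaar_ball_center μ x]
    refine (enorm_setIntegral_sq_le (v n) _).trans ?_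
    gcongr
    exact (ofReal_norm _).symm.trans_le (ENNReal.ofReal_le_ofReal (hC n))
  · rw [setLIntegral_const]
    have := (measure_ball_lt_top (μ := μ) (x := 0) (r := δ)).ne
    finiteness
  · refine ae_of_all _ fun x ↦ ?_
    have h := (ENNReal.continuous_pow 2).tendsto _ |>.comp (hv.tendsto_setIntegral
      (s := Metric.ball x δ) measurableSet_ball measure_ball_lt_top.ne).enorm
    simpa only [setIntegral_ball_zero_translate, Function.comp_def, enorm_zero, ne_eq,
      OfNat.ofNat_ne_zero, not_false_eq_true, zero_pow] using h

theorem WeaklyNull.tendsto_setLIntegral_enorm_sq {v : ℕ → Lp F 2 μ} (hv : WeaklyNull v)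
    {a : ℕ → E → F} (hav : ∀ n, v n =ᵐ[μ] a n) (ha : ∀ n, ContDiff ℝ 1 (a n)) {M : NNReal}
    (hM : ∀ n, ∫⁻ x, ‖fderiv ℝ (a n) x‖ₑ ^ 2 ∂μ ≤ M) {s : Set E} (hs : μ s ≠ ∞) :
    Tendsto (fun n ↦ ∫⁻ x in s, ‖a n x‖ₑ ^ 2 ∂μ) atTop (𝓝 0) := by
  have := FiniteDimensional.complete ℂ F
  rw [ENNReal.tendsto_nhds_zero]
  intro ε hε
  obtain ⟨δ, hδ, hδε⟩ : ∃ δ : NNReal, 0 < δ ∧ 2 * (δ + δ ^ 2 * M : ℝ≥0∞) ≤ ε := by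
    have hlim : Tendsto (fun δ : NNReal ↦ ((2 * (δ + δ ^ 2 * M) : NNReal) : ℝ≥0∞)) (𝓝[>] 0)
        (𝓝 ((2 * (0 + 0 ^ 2 * M) : NNReal) : ℝ≥0∞)) :=
      (Continuous.tendsto (by fun_prop) 0).mono_left nhdsWithin_le_nhds
    obtain ⟨δ, hδε, hδ⟩ := ((hlim.eventually_le_const (by simpa using hε)).and
      self_mem_nhdsWithin).exists
    exact ⟨δ, hδ, by exact_mod_cast hδε⟩
  have hlim := ENNReal.Tendsto.const_mul (a := ‖(μ.real (Metric.ball 0 δ))⁻¹‖ₑ ^ 2)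
    (hv.tendsto_lintegral_setIntegral_translate hs δ) (Or.inr (by finiteness))
  rw [mul_zero] at hlim
  filter_upwards [hlim.eventually_le_const (ENNReal.coe_pos.2 hδ)] with n hn
  have htranslate (x : E) : ∫ y in Metric.ball 0 (δ : ℝ), v n (x + y) ∂μ =
      ∫ y in Metric.ball 0 (δ : ℝ), a n (x + y) ∂μ := by
    rw [setIntegral_ball_zero_translate, setIntegral_ball_zero_translate]
    exact integral_congr_ae (ae_restrict_of_ae (hav n))
  simp only [htranslate] at hn
  calc ∫⁻ x in s, ‖a n x‖ₑ ^ 2 ∂μ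
    _ ≤ _ := setLIntegral_enorm_sq_le_setIntegral_translate μ hδ (ha n) s
    _ ≤ 2 * (δ + δ ^ 2 * M) := by
        gcongr
        exact hM n
    _ ≤ ε := hδε

end Rellich

end LocalCompactness

noncomputable section

section SobolevFunctions

variable {N : ℕ} {G G' : Type} [NormedAddCommGroup G] [NormedSpace ℝ G] [NormedAddCommGroup G']
  [NormedSpace ℝ G'] {k : ℕ} {u v : Rn N → G}

namespace MemSobolev

theorem contDiff (hu : MemSobolev k u) : ContDiff ℝ k u := hu.1

theorem mono {j : ℕ} (hjk : j ≤ k) (hu : MemSobolev k u) : MemSobolev j u :=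
  ⟨hu.contDiff.of_le (by exact_mod_cast hjk), fun i hi ↦ hu.2 i (hi.trans hjk)⟩

theorem of_norm_iteratedFDeriv_le (hu : MemSobolev k u) {w : Rn N → G'} (hw : ContDiff ℝ k w)
    {c : ℝ} (hle : ∀ i ≤ k, ∀ x, ‖iteratedFDeriv ℝ i w x‖ ≤ c * ‖iteratedFDeriv ℝ i u x‖) :
    MemSobolev k w :=
  ⟨hw, fun i hi ↦ (hu.2 i hi).of_le_mul
    (hw.continuous_iteratedFDeriv (by exact_mod_cast hi)).aestronglyMeasurable
    (ae_of_all _ (hle i hi))⟩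

theorem memLp (hu : MemSobolev k u) : MemLp u 2 volume :=
  (hu.2 0 k.zero_le).of_le hu.contDiff.continuous.aestronglyMeasurable
    (ae_of_all _ fun _ ↦ norm_iteratedFDeriv_zero.ge)

theorem fderiv_memLp (hu : MemSobolev 1 u) : MemLp (fderiv ℝ u) 2 volume :=
  (hu.2 1 le_rfl).of_le (hu.contDiff.continuous_fderiv one_ne_zero).aestronglyMeasurable
    (ae_of_all _ fun _ ↦ (norm_iteratedFDeriv_one ..).ge)

theorem clm_comp (L : G →L[ℝ] G') (hu : MemSobolev k u) : MemSobolev k (L ∘ u) :=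
  hu.of_norm_iteratedFDeriv_le (L.contDiff.comp hu.contDiff) fun _ hi _ ↦
    L.norm_iteratedFDeriv_comp_left hu.contDiff.contDiffAt (by exact_mod_cast hi)

theorem fderiv_apply (hu : MemSobolev (k + 1) u) (w : Rn N) :
    MemSobolev k (fun x ↦ fderiv ℝ u x w) := by
  have hfderiv : ContDiff ℝ k (fderiv ℝ u) := hu.contDiff.fderiv_right le_rfl
  have hcont : ContDiff ℝ k (fun x ↦ fderiv ℝ u x w) := hfderiv.clm_apply contDiff_const
  refine ⟨hcont, fun i hi ↦ (hu.2 (i + 1) (by lia)).of_le_mul (c := ‖w‖)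
    (hcont.continuous_iteratedFDeriv (by exact_mod_cast hi)).aestronglyMeasurable
    (ae_of_all _ fun x ↦ ?_)⟩
  rw [← norm_iteratedFDeriv_fderiv]
  exact norm_iteratedFDeriv_clm_apply_const hfderiv.contDiffAt (by exact_mod_cast hi)

theorem add (hu : MemSobolev k u) (hv : MemSobolev k v) : MemSobolev k (u + v) := by
  refine ⟨hu.contDiff.add hv.contDiff, fun i hi ↦ ?_⟩
  rw [iteratedFDeriv_add (hu.contDiff.of_le (by exact_mod_cast hi))
    (hv.contDiff.of_le (by exact_mod_cast hi))]
  exact (hu.2 i hi).add (hv.2 i hi)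

theorem zero : MemSobolev k (0 : Rn N → G) := by
  refine ⟨contDiff_const, fun i _ ↦ ?_⟩
  rw [show (0 : Rn N → G) = fun _ ↦ 0 from rfl, iteratedFDeriv_fun_zero]
  exact MemLp.zero

theorem h1Energy_lt_top (hu : MemSobolev 1 u) : h1Energy u < ∞ := by
  rw [h1Energy, lintegral_add_left (hu.contDiff.continuous.enorm.measurable.pow_const 2),
    ← eLpNorm_two_sq_eq_lintegral, ← eLpNorm_two_sq_eq_lintegral]
  exact add_lt_top.2 ⟨pow_lt_top hu.memLp.2, pow_lt_top hu.fderiv_memLp.2⟩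

end MemSobolev

theorem lap_eq_sum_fderiv (hu : ContDiff ℝ 2 u) (x : Rn N) :
    lap u x = ∑ i, fderiv ℝ (fun y ↦ fderiv ℝ u y (EuclideanSpace.single i 1)) x
      (EuclideanSpace.single i 1) := by
  refine Finset.sum_congr rfl fun i _ ↦ ?_
  have hfderiv : DifferentiableAt ℝ (fderiv ℝ u) x :=
    (hu.fderiv_right (m := 1) (by norm_num)).differentiable one_ne_zero x
  rw [iteratedFDeriv_two_apply, fderiv_clm_apply hfderiv (differentiableAt_const _)]
  simp

open Laplacian in
theorem lap_eq_laplacian (u : Rn N → G) : lap u = Δ u := by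
  rw [InnerProductSpace.laplacian_eq_iteratedFDeriv_orthonormalBasis u
    (EuclideanSpace.basisFun (Fin N) ℝ)]
  simp only [EuclideanSpace.basisFun_apply]
  rfl

theorem MemSobolev.lap_memLp (hu : MemSobolev 2 u) : MemLp (lap u) 2 volume := by
  simp only [funext (lap_eq_sum_fderiv hu.contDiff)]
  exact memLp_finsetSum _ fun i _ ↦ ((hu.fderiv_apply (k := 1) _).fderiv_apply (k := 0) _).memLp

theorem sq_norm_le_sum_sq_norm_apply {ι E F : Type*} [Fintype ι]
    [NormedAddCommGroup E] [InnerProductSpace ℝ E] [SeminormedAddCommGroup F] [NormedSpace ℝ F]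
    (b : OrthonormalBasis ι ℝ E) (L : E →L[ℝ] F) : ‖L‖ ^ 2 ≤ ∑ i, ‖L (b i)‖ ^ 2 := by
  refine (Real.le_sqrt (norm_nonneg _) (by positivity)).1
    (L.opNorm_le_bound (Real.sqrt_nonneg _) fun x ↦ ?_)
  calc ‖L x‖ = ‖∑ i, b.repr x i • L (b i)‖ := by
        conv_lhs => rw [← b.sum_repr x, map_sum]
        simp only [map_smul]
    _ ≤ ∑ i, ‖L (b i)‖ * ‖b.repr x i‖ :=
        norm_sum_le_of_le _ fun i _ ↦ (norm_smul_le _ _).trans_eq (mul_comm _ _)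
    _ ≤ √(∑ i, ‖L (b i)‖ ^ 2) * √(∑ i, ‖b.repr x i‖ ^ 2) := Real.sum_mul_le_sqrt_mul_sqrt _ _ _
    _ = √(∑ i, ‖L (b i)‖ ^ 2) * ‖x‖ := by rw [← EuclideanSpace.norm_eq, b.repr.norm_map]

end SobolevFunctions

section DirichletForm

variable {N : ℕ} {F : Type} [NormedAddCommGroup F] [InnerProductSpace ℂ F] {u v : Rn N → F}

theorem integrable_inner_of_memLp {α : Type*} [MeasurableSpace α] {μ : Measure α}
    {f g : α → F} (hf : MemLp f 2 μ) (hg : MemLp g 2 μ) :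
    Integrable (fun x ↦ inner ℂ (f x) (g x)) μ := by
  refine (L2.integrable_inner (𝕜 := ℂ) (hf.toLp f) (hg.toLp g)).congr ?_
  filter_upwards [hf.coeFn_toLp, hg.coeFn_toLp] with x hfx hgx
  rw [hfx, hgx]

theorem inner_toLp {α : Type*} [MeasurableSpace α] {μ : Measure α}
    {f g : α → F} (hf : MemLp f 2 μ) (hg : MemLp g 2 μ) :
    inner ℂ (hf.toLp f) (hg.toLp g) = ∫ x, inner ℂ (f x) (g x) ∂μ := by
  rw [L2.inner_def]
  refine integral_congr_ae ?_
  filter_upwards [hf.coeFn_toLp, hg.coeFn_toLp] with x hfx hgx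
  rw [hfx, hgx]

namespace MemSobolev

theorem integral_inner_fderiv (hu : MemSobolev 1 u) (hv : MemSobolev 1 v) (w : Rn N) :
    ∫ x, inner ℂ (u x) (fderiv ℝ v x w) = -∫ x, inner ℂ (fderiv ℝ u x w) (v x) := by
  have hu' := (hu.fderiv_apply (k := 0) w).memLp
  have hv' := (hv.fderiv_apply (k := 0) w).memLp
  have hB : IsBoundedBilinearMap ℝ fun p : F × F ↦ inner ℂ p.1 p.2 := isBoundedBilinearMap_inner
  exact integral_bilinear_fderiv_right_eq_neg_left_of_integrable (B := hB.toContinuousLinearMap)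
    (integrable_inner_of_memLp hu' hv.memLp) (integrable_inner_of_memLp hu.memLp hv')
    (integrable_inner_of_memLp hu.memLp hv.memLp)
    (fun x _ ↦ hu.contDiff.differentiable one_ne_zero x)
    (fun x _ ↦ hv.contDiff.differentiable one_ne_zero x)

theorem integral_inner_lap (hu : MemSobolev 1 u) (hv : MemSobolev 2 v) :
    ∫ x, inner ℂ (u x) (lap v x) = -∑ i, ∫ x, inner ℂ
      (fderiv ℝ u x (EuclideanSpace.single i 1)) (fderiv ℝ v x (EuclideanSpace.single i 1)) := by
  have hv' (i : Fin N) := hv.fderiv_apply (k := 1) (EuclideanSpace.single i 1)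
  simp only [lap_eq_sum_fderiv hv.contDiff, inner_sum]
  rw [integral_finsetSum _ fun i _ ↦ integrable_inner_of_memLp hu.memLp
    ((hv' i).fderiv_apply (k := 0) _).memLp, ← Finset.sum_neg_distrib]
  exact Finset.sum_congr rfl fun i _ ↦ hu.integral_inner_fderiv (hv' i) _

theorem integral_lap_inner (hu : MemSobolev 2 u) (hv : MemSobolev 2 v) :
    ∫ x, inner ℂ (lap u x) (v x) = ∫ x, inner ℂ (u x) (lap v x) := by
  calc ∫ x, inner ℂ (lap u x) (v x) = starRingEnd ℂ (∫ x, inner ℂ (v x) (lap u x)) := by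
        simp only [← integral_conj, inner_conj_symm]
    _ = -∑ i, ∫ x, inner ℂ (fderiv ℝ u x (EuclideanSpace.single i 1))
          (fderiv ℝ v x (EuclideanSpace.single i 1)) := by
        rw [(hv.mono one_le_two).integral_inner_lap hu]
        simp only [map_neg, map_sum, ← integral_conj, inner_conj_symm]
    _ = ∫ x, inner ℂ (u x) (lap v x) := ((hu.mono one_le_two).integral_inner_lap hv).symm

theorem re_integral_inner_lap (hu : MemSobolev 2 u) :
    (∫ x, inner ℂ (u x) (lap u x)).re =
      -∑ i, ∫ x, ‖fderiv ℝ u x (EuclideanSpace.single i 1)‖ ^ 2 := by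
  simp only [(hu.mono one_le_two).integral_inner_lap hu, inner_self_eq_norm_sq_to_K,
    Complex.coe_algebraMap, ← Complex.ofReal_pow, integral_complex_ofReal, ← Complex.ofReal_sum,
    Complex.neg_re, Complex.ofReal_re]

theorem lintegral_enorm_fderiv_sq_le (hu : MemSobolev 2 u) :
    ∫⁻ x, ‖fderiv ℝ u x‖ₑ ^ 2 ≤ ENNReal.ofReal (-(∫ x, inner ℂ (u x) (lap u x)).re) := by
  have hu' (i : Fin N) := hu.fderiv_apply (k := 1) (EuclideanSpace.single i 1)
  have hpartial (i : Fin N) :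
      ENNReal.ofReal (∫ x, ‖fderiv ℝ u x (EuclideanSpace.single i 1)‖ ^ 2) =
        ∫⁻ x, ‖fderiv ℝ u x (EuclideanSpace.single i 1)‖ₑ ^ 2 := by
    rw [ofReal_integral_eq_lintegral_ofReal ((hu' i).memLp.integrable_norm_pow two_ne_zero)
      (ae_of_all _ fun _ ↦ sq_nonneg _)]
    simp only [ofReal_pow (norm_nonneg _), ofReal_norm]
  rw [hu.re_integral_inner_lap, neg_neg,
    ofReal_sum_of_nonneg fun i _ ↦ integral_nonneg fun _ ↦ sq_nonneg _]
  simp only [hpartial]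
  rw [← lintegral_finsetSum _ fun i _ ↦
    (hu' i).contDiff.continuous.enorm.measurable.pow_const 2]
  refine lintegral_mono fun x ↦ ?_
  have h := sq_norm_le_sum_sq_norm_apply (EuclideanSpace.basisFun (Fin N) ℝ) (fderiv ℝ u x)
  simpa only [EuclideanSpace.basisFun_apply, ofReal_pow (norm_nonneg _), ofReal_norm,
    ofReal_sum_of_nonneg fun _ _ ↦ sq_nonneg _] using ENNReal.ofReal_le_ofReal h

end MemSobolev

end DirichletForm
end

noncomputable section

section SchrodingerOperator

open Filter Topology

variable {N : ℕ} {F : Type} [NormedAddCommGroup F] [InnerProductSpace ℂ F] {ω : ℝ}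
  {V : Rn N → F →L[ℂ] F} {u v : Rn N → F}

/-- The Schrödinger expression `-Δu + ωu + Vu` with a matrix potential `V`. -/
def schrodinger (ω : ℝ) (V : Rn N → F →L[ℂ] F) (u : Rn N → F) : Rn N → F :=
  -lap u + (ω : ℂ) • u + fun x ↦ V x (u x)

theorem schrodinger_add (hu : ContDiff ℝ 2 u) (hv : ContDiff ℝ 2 v) :
    schrodinger ω V (u + v) = schrodinger ω V u + schrodinger ω V v := by
  ext x
  have hlap : lap (u + v) x = lap u x + lap v x := by
    simp only [lap_eq_laplacian, hu.contDiffAt.laplacian_add hv.contDiffAt]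
  simp only [schrodinger, Pi.add_apply, Pi.neg_apply, Pi.smul_apply, hlap, map_add, smul_add]
  abel

theorem schrodinger_smul (c : ℂ) (hu : ContDiff ℝ 2 u) :
    schrodinger ω V (c • u) = c • schrodinger ω V u := by
  ext x
  have hlap : lap (c • u) x = c • lap u x := by
    simp only [lap_eq_laplacian, InnerProductSpace.laplacian_smul c hu.contDiffAt]
  simp only [schrodinger, Pi.add_apply, Pi.neg_apply, Pi.smul_apply, hlap, map_smul, smul_add,
    smul_neg, smul_comm (ω : ℂ) c]

theorem aestronglyMeasurable_schrodinger (hV : Continuous V) (hu : MemSobolev 2 u) :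
    AEStronglyMeasurable (schrodinger ω V u) volume :=
  (hu.lap_memLp.1.neg.add (hu.memLp.1.const_smul (ω : ℂ))).add
    (hV.clm_apply hu.contDiff.continuous).aestronglyMeasurable

/-- The natural domain of `-Δ + ω + V` in `L²`: the functions of class `H²` which the expression
maps to `L²`. -/
def schrodingerDomain (ω : ℝ) (V : Rn N → F →L[ℂ] F) : Submodule ℂ (Rn N → F) where
  carrier := {u | MemSobolev 2 u ∧ MemLp (schrodinger ω V u) 2 volume}
  add_mem' hu hv := ⟨hu.1.add hv.1,
    schrodinger_add hu.1.contDiff hv.1.contDiff ▸ hu.2.add hv.2⟩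
  zero_mem' := ⟨MemSobolev.zero, by
    have h := schrodinger_smul (ω := ω) (V := V) (u := 0) 0 contDiff_zero_fun
    simp only [zero_smul] at h
    change MemLp (schrodinger ω V 0) 2 volume
    rw [h]
    exact MemLp.zero⟩
  smul_mem' c _ hu := ⟨hu.1.clm_comp (c • ContinuousLinearMap.id ℝ F),
    schrodinger_smul c hu.1.contDiff ▸ hu.2.const_smul c⟩

namespace schrodingerDomain

theorem memSobolev (u : schrodingerDomain ω V) : MemSobolev 2 (u : Rn N → F) := u.2.1

theorem schrodinger_memLp (u : schrodingerDomain ω V) : MemLp (schrodinger ω V u) 2 volume := u.2.2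

theorem potential_memLp (u : schrodingerDomain ω V) :
    MemLp (fun x ↦ V x ((u : Rn N → F) x)) 2 volume := by
  have h := (schrodinger_memLp u).sub
    ((memSobolev u).lap_memLp.neg.add ((memSobolev u).memLp.const_smul (ω : ℂ)))
  rwa [schrodinger, add_sub_cancel_left] at h

/-- The inclusion of the domain of `-Δ + ω + V` into `L²`. -/
def toL2 (ω : ℝ) (V : Rn N → F →L[ℂ] F) : schrodingerDomain ω V →ₗ[ℂ]
    Lp F 2 (volume : Measure (Rn N)) where
  toFun u := (memSobolev u).memLp.toLp _
  map_add' _ _ := rfl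
  map_smul' _ _ := rfl

theorem toL2_apply (u : schrodingerDomain ω V) : toL2 ω V u = (memSobolev u).memLp.toLp _ := rfl

theorem toL2_injective : Function.Injective (toL2 ω V) := fun u v h ↦
  Subtype.ext <| ((memSobolev u).contDiff.continuous.ae_eq_iff_eq volume
    (memSobolev v).contDiff.continuous).1 <|
      (MemLp.toLp_eq_toLp_iff (memSobolev u).memLp (memSobolev v).memLp).1 h

end schrodingerDomain

open schrodingerDomain

/-- The operator `-Δ + ω + V` in `L²` with its natural domain. -/
def schrodingerOperator (ω : ℝ) (V : Rn N → F →L[ℂ] F) :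
    Lp F 2 (volume : Measure (Rn N)) →ₗ.[ℂ] Lp F 2 (volume : Measure (Rn N)) where
  domain := LinearMap.range (toL2 ω V)
  toFun :=
    { toFun := fun u ↦ (schrodinger_memLp u).toLp _
      map_add' := fun u v ↦ by
        rw [← MemLp.toLp_add]
        congr 1
        exact schrodinger_add (memSobolev u).contDiff (memSobolev v).contDiff
      map_smul' := fun c u ↦ by
        rw [RingHom.id_apply, ← MemLp.toLp_const_smul]
        congr 1
        exact schrodinger_smul c (memSobolev u).contDiff } ∘ₗ
    (LinearEquiv.ofInjective (toL2 ω V) toL2_injective).symm.toLinearMap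

/-- The identification of the concrete domain of `-Δ + ω + V` with the domain in `L²`. -/
def schrodingerDomainEquiv (ω : ℝ) (V : Rn N → F →L[ℂ] F) :
    schrodingerDomain ω V ≃ₗ[ℂ] (schrodingerOperator ω V).domain :=
  LinearEquiv.ofInjective (toL2 ω V) toL2_injective

theorem coe_schrodingerDomainEquiv (u : schrodingerDomain ω V) :
    (schrodingerDomainEquiv ω V u : Lp F 2 (volume : Measure (Rn N))) = toL2 ω V u := rfl

theorem schrodingerOperator_apply (u : schrodingerDomain ω V) :
    schrodingerOperator ω V (schrodingerDomainEquiv ω V u) = (schrodinger_memLp u).toLp _ := by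
  change MemLp.toLp _ (schrodinger_memLp
    ((schrodingerDomainEquiv ω V).symm (schrodingerDomainEquiv ω V u))) = _
  congr 2
  rw [LinearEquiv.symm_apply_apply]

theorem toLp_schrodinger (u : schrodingerDomain ω V) :
    (schrodinger_memLp u).toLp _ = -(memSobolev u).lap_memLp.toLp _ +
      (ω : ℂ) • (memSobolev u).memLp.toLp _ + (potential_memLp u).toLp _ := rfl

theorem schrodingerOperator_isFormalAdjoint (hV : ∀ x, (V x : F →ₗ[ℂ] F).IsSymmetric) :
    (schrodingerOperator ω V).IsFormalAdjoint (schrodingerOperator ω V) := by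
  intro x y
  obtain ⟨u, rfl⟩ := (schrodingerDomainEquiv ω V).surjective x
  obtain ⟨v, rfl⟩ := (schrodingerDomainEquiv ω V).surjective y
  have hlap : inner ℂ ((memSobolev u).lap_memLp.toLp _) ((memSobolev v).memLp.toLp _) =
      inner ℂ ((memSobolev u).memLp.toLp _) ((memSobolev v).lap_memLp.toLp _) := by
    simp only [inner_toLp, (memSobolev u).integral_lap_inner (memSobolev v)]
  have hpot : inner ℂ ((potential_memLp u).toLp _) ((memSobolev v).memLp.toLp _) =
      inner ℂ ((memSobolev u).memLp.toLp _) ((potential_memLp v).toLp _) := by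
    simp only [inner_toLp]
    exact integral_congr_ae (ae_of_all _ fun x ↦ hV x _ _)
  rw [schrodingerOperator_apply, schrodingerOperator_apply, toLp_schrodinger, toLp_schrodinger]
  simp only [coe_schrodingerDomainEquiv, toL2_apply, inner_add_left, inner_add_right,
    inner_neg_left, inner_neg_right, inner_smul_left, inner_smul_right, Complex.conj_ofReal, hlap,
    hpot]

theorem MemSobolev.min_mul_h1Energy_le (hω : 0 ≤ ω) (hu : MemSobolev 2 u) :
    ENNReal.ofReal (min 1 ω) * h1Energy u ≤
      ENNReal.ofReal (-(∫ x, inner ℂ (u x) (lap u x)).re + ω * ∫ x, ‖u x‖ ^ 2) := by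
  have hgrad_nonneg : 0 ≤ -(∫ x, inner ℂ (u x) (lap u x)).re := by
    rw [hu.re_integral_inner_lap, neg_neg]
    positivity
  rw [h1Energy, lintegral_add_left (hu.contDiff.continuous.enorm.measurable.pow_const 2), mul_add,
    add_comm, ofReal_add hgrad_nonneg (by positivity), ofReal_mul hω,
    ofReal_integral_eq_lintegral_ofReal (hu.memLp.integrable_norm_pow two_ne_zero)
      (ae_of_all _ fun _ ↦ sq_nonneg _)]
  simp only [ofReal_pow (norm_nonneg _), ofReal_norm]
  gcongr
  · refine (mul_le_of_le_one_left' ?_).trans hu.lintegral_enorm_fderiv_sq_le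
    exact ofReal_le_one.2 (min_le_left _ _)
  · exact min_le_right _ _

/-- The real part of the quadratic form of `-Δ + ω + V` on its natural domain. -/
def schrodingerForm (u : schrodingerDomain ω V) : ℝ :=
  (inner ℂ (toL2 ω V u) (schrodingerOperator ω V (schrodingerDomainEquiv ω V u))).re

theorem schrodingerForm_eq (u : schrodingerDomain ω V) : schrodingerForm u =
    -(∫ x, inner ℂ ((u : Rn N → F) x) (lap u x)).re + ω * (∫ x, ‖(u : Rn N → F) x‖ ^ 2) +
      (∫ x, inner ℂ ((u : Rn N → F) x) (V x ((u : Rn N → F) x))).re := by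
  rw [schrodingerForm, schrodingerOperator_apply, toLp_schrodinger, toL2_apply]
  simp only [inner_add_right, inner_neg_right, inner_smul_right, inner_toLp]
  simp only [inner_self_eq_norm_sq_to_K, Complex.add_re, Complex.neg_re, Complex.re_ofReal_mul,
    Complex.coe_algebraMap, ← Complex.ofReal_pow, integral_complex_ofReal, Complex.ofReal_re]

theorem min_mul_h1Energy_le_add_lintegral (hω : 0 ≤ ω) (u : schrodingerDomain ω V) :
    ENNReal.ofReal (min 1 ω) * h1Energy (u : Rn N → F) ≤
      ENNReal.ofReal (schrodingerForm u) + ∫⁻ x, ‖V x‖ₑ * ‖(u : Rn N → F) x‖ₑ ^ 2 := by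
  set P := ∫ x, inner ℂ ((u : Rn N → F) x) (V x ((u : Rn N → F) x))
  have hpot : ENNReal.ofReal (-P.re) ≤ ∫⁻ x, ‖V x‖ₑ * ‖(u : Rn N → F) x‖ₑ ^ 2 :=
    calc ENNReal.ofReal (-P.re) ≤ ‖P‖ₑ := by
          rw [← ofReal_norm]
          exact ENNReal.ofReal_le_ofReal ((neg_le_abs _).trans (Complex.abs_re_le_norm _))
      _ ≤ ∫⁻ x, ‖inner ℂ ((u : Rn N → F) x) (V x ((u : Rn N → F) x))‖ₑ :=
          enorm_integral_le_lintegral_enorm _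
      _ ≤ ∫⁻ x, ‖V x‖ₑ * ‖(u : Rn N → F) x‖ₑ ^ 2 := lintegral_mono fun x ↦ by
          set w := (u : Rn N → F) x
          have h : ‖inner ℂ w (V x w)‖ ≤ ‖w‖ * (‖V x‖ * ‖w‖) :=
            (norm_inner_le_norm _ _).trans (by gcongr; exact (V x).le_opNorm w)
          simpa only [← ofReal_norm, ← ofReal_pow, ← ofReal_mul, norm_nonneg, pow_two,
            mul_left_comm] using ENNReal.ofReal_le_ofReal h
  refine ((memSobolev u).min_mul_h1Energy_le hω).trans ?_
  rw [schrodingerForm_eq]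
  set T := -(∫ x, inner ℂ ((u : Rn N → F) x) (lap u x)).re +
    ω * ∫ x, ‖(u : Rn N → F) x‖ ^ 2
  calc ENNReal.ofReal T = ENNReal.ofReal (T + P.re + -P.re) := by rw [add_neg_cancel_right]
    _ ≤ ENNReal.ofReal (T + P.re) + ENNReal.ofReal (-P.re) := ofReal_add_le
    _ ≤ _ := add_le_add_right hpot _

theorem exists_lintegral_enorm_mul_sq_le (hV : Continuous V) (hV' : VanishesAtInfinityAsForm F V)
    {c : NNReal} (hc : 0 < c) : ∃ (R : ℝ) (K : NNReal), ∀ u : Rn N → F, ContDiff ℝ 1 u →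
      ∫⁻ x, ‖V x‖ₑ * ‖u x‖ₑ ^ 2 ≤
        K * (∫⁻ x in Metric.closedBall 0 R, ‖u x‖ₑ ^ 2) + c * h1Energy u := by
  obtain ⟨R, hR⟩ := hV' c hc
  obtain ⟨K, hK⟩ := (isCompact_closedBall (0 : Rn N) R).exists_bound_of_continuousOn
    hV.continuousOn
  refine ⟨R, K.toNNReal, fun u hu ↦ ?_⟩
  rw [← lintegral_add_compl _ (measurableSet_closedBall (x := (0 : Rn N)) (ε := R)),
    ← lintegral_const_mul _ (hu.continuous.enorm.measurable.pow_const 2)]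
  refine add_le_add (setLIntegral_mono' measurableSet_closedBall fun x hx ↦ ?_) (hR u hu)
  gcongr
  rw [← ofReal_norm]
  exact ENNReal.ofReal_le_ofReal (hK x hx)

-- Gårding's inequality: the form of `V` outside a large ball is absorbed by the left-hand side.
theorem exists_h1Energy_le_mul_add (hω : 0 < ω) (hV : Continuous V)
    (hV' : VanishesAtInfinityAsForm F V) :
    ∃ (R : ℝ) (K : NNReal), ∀ u : schrodingerDomain ω V, h1Energy (u : Rn N → F) ≤
      K * (ENNReal.ofReal (schrodingerForm u) +
        ∫⁻ x in Metric.closedBall 0 R, ‖(u : Rn N → F) x‖ₑ ^ 2) := by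
  set c : NNReal := (min 1 ω / 2).toNNReal
  have hc : 0 < c := Real.toNNReal_pos.2 (by positivity)
  have hcc : ENNReal.ofReal (min 1 ω) = c + c := by
    rw [← ENNReal.ofReal, ← ofReal_add (by positivity) (by positivity), add_halves]
  obtain ⟨R, K, hK⟩ := exists_lintegral_enorm_mul_sq_le hV hV' hc
  refine ⟨R, c⁻¹ * max 1 K, fun u ↦ ?_⟩
  have hu : MemSobolev 1 (u : Rn N → F) := (memSobolev u).mono one_le_two
  set E := h1Energy (u : Rn N → F)
  set L := ∫⁻ x in Metric.closedBall 0 R, ‖(u : Rn N → F) x‖ₑ ^ 2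
  set Q := ENNReal.ofReal (schrodingerForm u)
  have habsorb : c * E ≤ Q + K * L := by
    have hfinite : c * E ≠ ∞ := mul_ne_top coe_ne_top hu.h1Energy_lt_top.ne
    refine ENNReal.le_of_add_le_add_right hfinite ?_
    calc c * E + c * E = ENNReal.ofReal (min 1 ω) * E := by rw [hcc, add_mul]
      _ ≤ Q + (K * L + c * E) := (min_mul_h1Energy_le_add_lintegral hω.le u).trans
          (add_le_add_right (hK u hu.contDiff) _)
      _ = Q + K * L + c * E := (add_assoc _ _ _).symm
  calc E = (c : ENNReal)⁻¹ * (c * E) :=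
        (ENNReal.inv_mul_cancel_left (coe_ne_zero.2 hc.ne') coe_ne_top).symm
    _ ≤ (c : ENNReal)⁻¹ * ((max 1 K : NNReal) * Q + (max 1 K : NNReal) * L) := by
        gcongr
        refine habsorb.trans (add_le_add (le_mul_of_one_le_left' ?_) ?_)
        · exact_mod_cast le_max_left 1 K
        · gcongr
          exact le_max_right _ _
    _ = _ := by
        rw [← mul_add, ← mul_assoc, coe_mul, coe_inv hc.ne']

theorem enorm_toL2_sq (u : schrodingerDomain ω V) :
    ‖toL2 ω V u‖ₑ ^ 2 = ∫⁻ x, ‖(u : Rn N → F) x‖ₑ ^ 2 := by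
  rw [toL2_apply, Lp.enorm_toLp, eLpNorm_two_sq_eq_lintegral]

theorem tendsto_toL2_zero_of_h1Energy {a : ℕ → schrodingerDomain ω V}
    (ha : Tendsto (fun n ↦ h1Energy (a n : Rn N → F)) atTop (𝓝 0)) :
    Tendsto (fun n ↦ toL2 ω V (a n)) atTop (𝓝 0) := by
  have hsq : Tendsto (fun n ↦ ‖toL2 ω V (a n)‖ₑ ^ 2) atTop (𝓝 0) :=
    tendsto_of_tendsto_of_tendsto_of_le_of_le tendsto_const_nhds ha (fun _ ↦ zero_le)
      fun n ↦ (enorm_toL2_sq (a n)).trans_le (lintegral_enorm_sq_le_h1Energy _)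
  rw [tendsto_zero_iff_enorm_tendsto_zero]
  have hroot := hsq.ennrpow_const ((2 : ℕ) : ℝ)⁻¹
  simp only [pow_rpow_inv_natCast two_ne_zero] at hroot
  simpa using hroot

theorem schrodingerOperator_coerciveModCompact [FiniteDimensional ℂ F] (hω : 0 < ω)
    (hV : Continuous V) (hV' : VanishesAtInfinityAsForm F V) :
    CoerciveModCompact (schrodingerOperator ω V) := by
  intro v hweak hform
  obtain ⟨a, rfl⟩ : ∃ a : ℕ → schrodingerDomain ω V,
      (fun n ↦ schrodingerDomainEquiv ω V (a n)) = v :=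
    ⟨_, funext fun n ↦ (schrodingerDomainEquiv ω V).apply_symm_apply (v n)⟩
  change Tendsto (fun n ↦ schrodingerForm (a n)) atTop (𝓝 0) at hform
  change Tendsto (fun n ↦ toL2 ω V (a n)) atTop (𝓝 0)
  obtain ⟨R, K, hK⟩ := exists_h1Energy_le_mul_add hω hV hV'
  obtain ⟨C, hC⟩ := hweak.exists_norm_le
  obtain ⟨B, hB⟩ := hform.bddAbove_range
  set M : NNReal := K * (B.toNNReal + C.toNNReal ^ 2)
  have hM (n : ℕ) : h1Energy (a n : Rn N → F) ≤ M := by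
    refine (hK (a n)).trans ?_
    have hmass : ∫⁻ x in Metric.closedBall 0 R, ‖(a n : Rn N → F) x‖ₑ ^ 2 ≤
        ENNReal.ofReal C ^ 2 := by
      refine (setLIntegral_le_lintegral _ _).trans ?_
      rw [← enorm_toL2_sq, ← ofReal_norm]
      gcongr
      exact hC n
    push_cast [M]
    exact mul_le_mul_right
      (add_le_add (ENNReal.ofReal_le_ofReal (hB (Set.mem_range_self n))) hmass) _
  have hinside : Tendsto (fun n ↦ ∫⁻ x in Metric.closedBall 0 R, ‖(a n : Rn N → F) x‖ₑ ^ 2)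
      atTop (𝓝 0) :=
    hweak.tendsto_setLIntegral_enorm_sq (fun n ↦ (memSobolev (a n)).memLp.coeFn_toLp)
      (fun n ↦ ((memSobolev (a n)).mono one_le_two).contDiff)
      (fun n ↦ (lintegral_enorm_fderiv_sq_le_h1Energy _).trans (hM n))
      measure_closedBall_lt_top.ne
  have hbound : Tendsto (fun n ↦ K * (ENNReal.ofReal (schrodingerForm (a n)) +
      ∫⁻ x in Metric.closedBall 0 R, ‖(a n : Rn N → F) x‖ₑ ^ 2)) atTop (𝓝 0) := by
    simpa only [ofReal_zero, add_zero, mul_zero] using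
      ENNReal.Tendsto.const_mul ((ENNReal.tendsto_ofReal hform).add hinside) (.inr coe_ne_top)
  exact tendsto_toL2_zero_of_h1Energy <|
    tendsto_of_tendsto_of_tendsto_of_le_of_le tendsto_const_nhds hbound (fun _ ↦ zero_le)
      fun n ↦ hK (a n)

end SchrodingerOperator
end

section Nonlinearity

variable {g : ℝ → ℝ}

theorem im_conj_mul_fderiv_fpot {t : ℝ} {w : ℂ} (hf : DifferentiableAt ℝ (fpot g) (t • w)) :
    ((starRingEnd ℂ) w * fderiv ℝ (fpot g) (t • w) w).im = 0 := by
  have hline : HasDerivAt (fun s : ℝ ↦ s • w) w t := by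
    simpa using (hasDerivAt_id t).smul_const w
  have hderiv := Complex.imCLM.hasFDerivAt.comp_hasDerivAt t
    ((hf.hasFDerivAt.comp_hasDerivAt t hline).const_mul ((starRingEnd ℂ) w))
  have hradial : (Complex.imCLM ∘ fun s : ℝ ↦ (starRingEnd ℂ) w * (fpot g ∘ (· • w)) s) =
      fun _ ↦ 0 := by
    ext s
    have h : (starRingEnd ℂ) w * fpot g (s • w) =
        ((-g (Complex.normSq (s • w)) * s * Complex.normSq w : ℝ) : ℂ) := by
      rw [fpot, Complex.real_smul]
      push_cast
      rw [← Complex.mul_conj]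
      ring
    simp only [Function.comp_apply, Complex.imCLM_apply, h, Complex.ofReal_im]
  rw [hradial] at hderiv
  exact hderiv.unique (hasDerivAt_const t 0)

-- `f` commutes with rotations, so its derivative along the rotation orbit of `z` is `i f(z)`.
theorem fderiv_fpot_I_mul {z : ℂ} (hf : DifferentiableAt ℝ (fpot g) z) :
    fderiv ℝ (fpot g) z (Complex.I * z) = Complex.I * fpot g z := by
  have hrot (w : ℂ) :
      HasDerivAt (fun t : ℝ ↦ Complex.exp (t * Complex.I) * w) (Complex.I * w) 0 := by
    simpa using ((Complex.ofRealCLM.hasDerivAt (x := 0)).mul_const Complex.I).cexp.mul_const w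
  have hequiv : (fpot g ∘ fun t : ℝ ↦ Complex.exp (t * Complex.I) * z) =
      fun t : ℝ ↦ Complex.exp (t * Complex.I) * fpot g z := by
    ext t
    have hnorm : Complex.normSq (Complex.exp (t * Complex.I) * z) = Complex.normSq z := by
      rw [Complex.normSq_mul, Complex.normSq_eq_norm_sq (Complex.exp _),
        Complex.norm_exp_ofReal_mul_I, one_pow, one_mul]
    simp only [Function.comp_apply, fpot, hnorm]
    ring
  have hf' : HasFDerivAt (fpot g) (fderiv ℝ (fpot g) z)
      (Complex.exp ((0 : ℝ) * Complex.I) * z) := by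
    simpa using hf.hasFDerivAt
  have hderiv := hf'.comp_hasDerivAt 0 (hrot z)
  rw [hequiv] at hderiv
  exact hderiv.unique (hrot (fpot g z))

theorem re_fderiv_fpot_I {z : ℂ} (hf : DifferentiableAt ℝ (fpot g) z) :
    (fderiv ℝ (fpot g) z Complex.I).re = (fderiv ℝ (fpot g) z 1).im := by
  set L := fderiv ℝ (fpot g) z with hL
  rcases eq_or_ne z 0 with rfl | hz
  · have hradial (w : ℂ) : ((starRingEnd ℂ) w * L w).im = 0 := by
      have h := im_conj_mul_fderiv_fpot (g := g) (t := 0) (w := w) (by rwa [zero_smul])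
      rwa [zero_smul] at h
    have h1 : (L 1).im = 0 := by simpa using hradial 1
    have hI : (L Complex.I).re = 0 := by simpa using hradial Complex.I
    rw [h1, hI]
  have hradial : ((starRingEnd ℂ) z * L z).im = 0 := by
    have h := im_conj_mul_fderiv_fpot (g := g) (t := 1) (w := z) (by rwa [one_smul])
    rwa [one_smul] at h
  have hangular : ((starRingEnd ℂ) z * L (Complex.I * z)).re = 0 := by
    have h : (starRingEnd ℂ) z * (Complex.I * fpot g z) =
        ((-g (Complex.normSq z) * Complex.normSq z : ℝ) : ℂ) * Complex.I := by
      rw [fpot]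
      push_cast
      rw [← Complex.mul_conj]
      ring
    rw [fderiv_fpot_I_mul hf, h, Complex.re_ofReal_mul, Complex.I_re, mul_zero]
  have hbasis (w : ℂ) : L w = w.re • L 1 + w.im • L Complex.I := by
    rw [← map_smul, ← map_smul, ← map_add]
    simp [Complex.re_add_im]
  rw [hbasis] at hradial hangular
  simp only [Complex.mul_re, Complex.mul_im, Complex.conj_re, Complex.conj_im, Complex.add_re,
    Complex.add_im, Complex.real_smul, Complex.ofReal_re, Complex.ofReal_im, Complex.I_re,
    Complex.I_im] at hradial hangular
  have hprod : Complex.normSq z * ((L Complex.I).re - (L 1).im) = 0 := by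
    rw [Complex.normSq_apply]
    linear_combination hangular - hradial
  exact sub_eq_zero.1 ((mul_eq_zero.1 hprod).resolve_left (Complex.normSq_pos.2 hz).ne')

theorem H1bound.exists_norm_fderiv_le {p : ℝ} {f : ℂ → ℂ} (h : H1bound p f) :
    ∃ C, 0 ≤ C ∧ ∀ z, ‖fderiv ℝ f z‖ ≤ C * ‖z‖ ^ (p - 1) := by
  obtain ⟨-, -, h0, C, hsmall, hlarge⟩ := h
  refine ⟨|C|, abs_nonneg C, fun z ↦ le_trans ?_
    (mul_le_mul_of_nonneg_right (le_abs_self C) (by positivity))⟩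
  rcases le_or_gt p 2 with hp2 | hp2
  · simpa only [h0, sub_zero] using hsmall hp2 z 0
  · have hpow : ‖z‖ ^ (p - 1) = ‖z‖ ^ (p - 2) * ‖z‖ := by
      rw [← Real.rpow_add_one' (norm_nonneg z) (by linarith)]
      congr 1
      ring
    simpa only [h0, sub_zero, norm_zero, Real.zero_rpow (sub_pos.2 hp2).ne', add_zero, mul_assoc,
      hpow] using hlarge hp2 z 0

namespace H1full

variable {N : ℕ} {f₁ f₂ : ℂ → ℂ} {p₁ p₂ : ℝ}

theorem fpot_eq_add (h : H1full N g f₁ f₂ p₁ p₂) : fpot g = f₁ + f₂ := funext h.hsum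

theorem contDiff_fpot (h : H1full N g f₁ f₂ p₁ p₂) : ContDiff ℝ 1 (fpot g) :=
  h.fpot_eq_add ▸ h.bd1.1.add h.bd2.1

theorem fderiv_fpot (h : H1full N g f₁ f₂ p₁ p₂) (z : ℂ) :
    fderiv ℝ (fpot g) z = fderiv ℝ f₁ z + fderiv ℝ f₂ z :=
  h.fpot_eq_add ▸ fderiv_add (h.bd1.1.differentiable one_ne_zero z)
    (h.bd2.1.differentiable one_ne_zero z)

theorem fderiv_fpot_zero (h : H1full N g f₁ f₂ p₁ p₂) : fderiv ℝ (fpot g) 0 = 0 := by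
  rw [h.fderiv_fpot, h.bd1.2.2.1, h.bd2.2.2.1, add_zero]

theorem subcrit_max (h : H1full N g f₁ f₂ p₁ p₂) : Subcrit N (max p₁ p₂) := by
  rcases max_choice p₁ p₂ with hp | hp <;> rw [hp]
  exacts [h.sub1, h.sub2]

theorem exists_norm_fderiv_fpot_le (h : H1full N g f₁ f₂ p₁ p₂) :
    ∃ C, ∀ z, ‖fderiv ℝ (fpot g) z‖ ≤ C * (1 + ‖z‖ ^ (max p₁ p₂ - 1)) := by
  obtain ⟨C₁, hC₁, hf₁⟩ := h.bd1.exists_norm_fderiv_le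
  obtain ⟨C₂, hC₂, hf₂⟩ := h.bd2.exists_norm_fderiv_le
  have hpow {q : ℝ} (z : ℂ) (hq : 1 < q) (hqp : q ≤ max p₁ p₂) :
      ‖z‖ ^ (q - 1) ≤ 1 + ‖z‖ ^ (max p₁ p₂ - 1) := by
    rcases le_total ‖z‖ 1 with hz | hz
    · exact (Real.rpow_le_one (norm_nonneg z) hz (sub_pos.2 hq).le).trans
        (le_add_of_nonneg_right (by positivity))
    · exact (Real.rpow_le_rpow_of_exponent_le hz (sub_le_sub_right hqp 1)).trans
        (le_add_of_nonneg_left zero_le_one)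
  refine ⟨C₁ + C₂, fun z ↦ ?_⟩
  rw [h.fderiv_fpot, add_mul]
  refine (norm_add_le _ _).trans (add_le_add ((hf₁ z).trans ?_) ((hf₂ z).trans ?_))
  · exact mul_le_mul_of_nonneg_left (hpow z h.sub1.1 (le_max_left _ _)) hC₁
  · exact mul_le_mul_of_nonneg_left (hpow z h.sub2.1 (le_max_right _ _)) hC₂

end H1full

end Nonlinearity

noncomputable section

section MatrixOperators

/-- `ℂ²` as a Hilbert space; the product `ℂ × ℂ` itself carries the sup norm. -/
abbrev C2 := WithLp 2 (ℂ × ℂ)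

/-- The identity from `ℂ × ℂ` to the Hilbert space `ℂ²`. -/
def toC2 : (ℂ × ℂ) ≃L[ℂ] C2 := (WithLp.prodContinuousLinearEquiv 2 ℂ ℂ ℂ).symm

theorem inner_toC2 (v w : ℂ × ℂ) :
    inner ℂ (toC2 v) (toC2 w) = (starRingEnd ℂ) v.1 * w.1 + (starRingEnd ℂ) v.2 * w.2 := by
  rw [WithLp.prod_inner_apply, RCLike.inner_apply', RCLike.inner_apply']
  rfl

theorem norm_le_norm_toC2 (w : ℂ × ℂ) : ‖w‖ ≤ ‖toC2 w‖ := by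
  exact max_le (WithLp.norm_fst_le _ (toC2 w)) (WithLp.norm_snd_le _ (toC2 w))

/-- The complexification `cext T` of a real-linear map of `ℝ² ≅ ℂ`, as an operator on the Hilbert
space `ℂ²` depending linearly on `T`. -/
def complexify : (ℂ →L[ℝ] ℂ) →ₗ[ℝ] (C2 →L[ℂ] C2) where
  toFun T := LinearMap.toContinuousLinearMap
    { toFun := fun w ↦ toC2 (cext T (toC2.symm w))
      map_add' := fun v w ↦ by
        rw [← map_add, map_add]
        congr 1
        ext <;> simp only [cext, Prod.fst_add, Prod.snd_add] <;> ring
      map_smul' := fun c w ↦ by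
        rw [RingHom.id_apply, ← map_smul, map_smul]
        congr 1
        ext <;> simp only [cext, Prod.smul_fst, Prod.smul_snd, smul_eq_mul] <;> ring }
  map_add' S T := by
    ext w : 1
    change toC2 (cext (S + T) (toC2.symm w)) =
      toC2 (cext S (toC2.symm w) + cext T (toC2.symm w))
    congr 1
    ext <;> simp only [cext, add_apply, Complex.add_re, Complex.add_im,
      Complex.ofReal_add, Prod.mk_add_mk] <;> ring
  map_smul' c T := by
    ext w : 1
    change toC2 (cext (c • T) (toC2.symm w)) = toC2 (c • cext T (toC2.symm w))
    congr 1
    ext <;> simp only [cext, smul_apply, Complex.real_smul, Complex.re_ofReal_mul,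
      Complex.im_ofReal_mul, Complex.ofReal_mul, Prod.smul_mk] <;> ring

theorem complexify_toC2 (T : ℂ →L[ℝ] ℂ) (w : ℂ × ℂ) :
    complexify T (toC2 w) = toC2 (cext T w) := by
  change toC2 (cext T (toC2.symm (toC2 w))) = _
  rw [toC2.symm_apply_apply]

theorem complexify_isSymmetric {T : ℂ →L[ℝ] ℂ} (hT : (T Complex.I).re = (T 1).im) :
    (complexify T : C2 →ₗ[ℂ] C2).IsSymmetric := by
  intro v w
  obtain ⟨v, rfl⟩ := toC2.surjective v
  obtain ⟨w, rfl⟩ := toC2.surjective w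
  simp only [ContinuousLinearMap.coe_coe, complexify_toC2, inner_toC2, cext, hT, map_add, map_mul,
    Complex.conj_ofReal]
  ring

/-- The symplectic matrix `J = [[0, 1], [-1, 0]]` on `ℂ²`. -/
def symplecticC2 : C2 →L[ℂ] C2 :=
  (toC2 : ℂ × ℂ →L[ℂ] C2) ∘L
    ((ContinuousLinearMap.snd ℂ ℂ ℂ).prod (-ContinuousLinearMap.fst ℂ ℂ ℂ)) ∘L
      (toC2.symm : C2 →L[ℂ] ℂ × ℂ)

theorem symplecticC2_toC2 (w : ℂ × ℂ) : symplecticC2 (toC2 w) = toC2 (w.2, -w.1) := rfl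

theorem isSkewComplexStructure_symplecticC2 :
    IsSkewComplexStructure (symplecticC2 : C2 →ₗ[ℂ] C2) where
  inner_left v w := by
    obtain ⟨v, rfl⟩ := toC2.surjective v
    obtain ⟨w, rfl⟩ := toC2.surjective w
    simp only [ContinuousLinearMap.coe_coe, symplecticC2_toC2, inner_toC2, map_neg]
    ring
  apply_apply v := by
    obtain ⟨v, rfl⟩ := toC2.surjective v
    simp only [ContinuousLinearMap.coe_coe, symplecticC2_toC2, ← map_neg]
    rfl

theorem IsSkewComplexStructure.compLpL {α F : Type*} [MeasurableSpace α] {μ : Measure α}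
    [NormedAddCommGroup F] [InnerProductSpace ℂ F] {J : F →L[ℂ] F}
    (hJ : IsSkewComplexStructure (J : F →ₗ[ℂ] F)) :
    IsSkewComplexStructure (J.compLpL 2 μ : Lp F 2 μ →ₗ[ℂ] Lp F 2 μ) where
  inner_left f h := by
    rw [L2.inner_def, L2.inner_def, ← integral_neg]
    refine integral_congr_ae ?_
    filter_upwards [J.coeFn_compLpL f, J.coeFn_compLpL h] with x hf hh
    rw [ContinuousLinearMap.coe_coe, hf, hh]
    exact hJ.inner_left _ _
  apply_apply f := by
    refine Lp.ext ?_
    filter_upwards [J.coeFn_compLpL f, J.coeFn_compLpL (J.compLpL 2 μ f), Lp.coeFn_neg f]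
      with x hf hJf hneg
    rw [ContinuousLinearMap.coe_coe, hJf, hf, hneg]
    exact hJ.apply_apply _

end MatrixOperators

section LinearizedOperator

open Filter Topology

variable {N : ℕ} {g : ℝ → ℝ} {ω : ℝ} {φ : Rn N → ℂ}

/-- The complexified potential `Df(φ)`. -/
def linearizedPotential (g : ℝ → ℝ) (φ : Rn N → ℂ) (x : Rn N) : C2 →L[ℂ] C2 :=
  complexify (fderiv ℝ (fpot g) (φ x))

theorem toC2_AopC {u : Rn N → ℂ × ℂ} (hu : ContDiff ℝ 2 u) (x : Rn N) :
    toC2 (AopC g ω φ u x) =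
      symplecticC2 (schrodinger ω (linearizedPotential g φ) (toC2 ∘ u) x) := by
  have hfst : lap (fun y ↦ (u y).1) x = (lap u x).1 := by
    rw [lap_eq_laplacian, lap_eq_laplacian]
    exact hu.contDiffAt.laplacian_CLM_comp_left (l := ContinuousLinearMap.fst ℝ ℂ ℂ)
  have hsnd : lap (fun y ↦ (u y).2) x = (lap u x).2 := by
    rw [lap_eq_laplacian, lap_eq_laplacian]
    exact hu.contDiffAt.laplacian_CLM_comp_left (l := ContinuousLinearMap.snd ℝ ℂ ℂ)
  have hlap : lap (toC2 ∘ u) x = toC2 (lap u x) := by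
    rw [lap_eq_laplacian, lap_eq_laplacian]
    exact hu.contDiffAt.laplacian_CLM_comp_left
      (l := (toC2 : ℂ × ℂ →L[ℂ] C2).restrictScalars ℝ)
  simp only [schrodinger, Pi.add_apply, Pi.neg_apply, Pi.smul_apply, hlap, linearizedPotential,
    Function.comp_apply, complexify_toC2, ← map_neg, ← map_smul, ← map_add, symplecticC2_toC2,
    AopC, hfst, hsnd]
  rfl

/-- The Hamiltonian `H = -Δ + ω + Df(φ)` of the linearized operator `A = JH`, on `L²(ℝᴺ, ℂ²)`. -/
def linearizedHamiltonian (g : ℝ → ℝ) (ω : ℝ) (φ : Rn N → ℂ) :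
    Lp C2 2 (volume : Measure (Rn N)) →ₗ.[ℂ] Lp C2 2 (volume : Measure (Rn N)) :=
  schrodingerOperator ω (linearizedPotential g φ)

/-- The symplectic matrix acting on `L²(ℝᴺ, ℂ²)`. -/
def symplecticL2 (N : ℕ) :
    Lp C2 2 (volume : Measure (Rn N)) →ₗ[ℂ] Lp C2 2 (volume : Measure (Rn N)) :=
  (symplecticC2.compLpL 2 volume).toLinearMap

theorem isSkewComplexStructure_symplecticL2 : IsSkewComplexStructure (symplecticL2 N) :=
  isSkewComplexStructure_symplecticC2.compLpL

theorem linearizedHamiltonian_isFormalAdjoint (hf : ContDiff ℝ 1 (fpot g)) :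
    (linearizedHamiltonian g ω φ).IsFormalAdjoint (linearizedHamiltonian g ω φ) :=
  schrodingerOperator_isFormalAdjoint fun _ ↦
    complexify_isSymmetric (re_fderiv_fpot_I (hf.differentiable one_ne_zero _))

theorem continuous_linearizedPotential (hf : ContDiff ℝ 1 (fpot g)) (hφ : Continuous φ) :
    Continuous (linearizedPotential g φ) :=
  complexify.continuous_of_finiteDimensional.comp ((hf.continuous_fderiv one_ne_zero).comp hφ)

theorem linearizedPotential_vanishesAtInfinityAsForm (hN : 1 ≤ N) (hφ : MemSobolev 1 φ)
    (hf : ContDiff ℝ 1 (fpot g)) (hf0 : fderiv ℝ (fpot g) 0 = 0) {p C : ℝ} (hp : Subcrit N p)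
    (hgrowth : ∀ z, ‖fderiv ℝ (fpot g) z‖ ≤ C * (1 + ‖z‖ ^ (p - 1))) :
    VanishesAtInfinityAsForm C2 (linearizedPotential g φ) := by
  obtain ⟨r, hr, hpr, hembed⟩ := exists_sobolevEmbedding_of_subcrit hN hp
  obtain ⟨K, hK⟩ := hembed ℂ
  have hfin : ∫⁻ x, ‖φ x‖ₑ ^ r ≠ ∞ := ne_top_of_le_ne_top
    (mul_ne_top coe_ne_top (rpow_ne_top_of_nonneg (by linarith) hφ.h1Energy_lt_top.ne))
    (hK φ hφ.contDiff)
  set L := LinearMap.toContinuousLinearMap complexify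
  have hD : Continuous fun z ↦ L (fderiv ℝ (fpot g) z) :=
    L.continuous.comp (hf.continuous_fderiv one_ne_zero)
  have hDgrowth (z : ℂ) :
      ‖L (fderiv ℝ (fpot g) z)‖ ≤ ‖L‖ * C * (1 + ‖z‖ ^ (p - 1)) := by
    rw [mul_assoc]
    exact (L.le_opNorm _).trans (mul_le_mul_of_nonneg_left (hgrowth z) (norm_nonneg L))
  refine vanishesAtInfinityAsForm_of_le_add_rpow hr (hembed C2) hφ.contDiff.continuous hfin
    fun ε hε ↦ ?_
  obtain ⟨M, hM⟩ := exists_nnnorm_le_add_mul_rpow hD.continuousAt (by rw [hf0, map_zero]) hDgrowth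
    (sub_pos.2 hp.1).le (show p - 1 ≤ r - 2 by linarith) hε
  exact ⟨M, fun x ↦ hM (φ x)⟩

theorem schrodinger_toC2_comp {u : Rn N → ℂ × ℂ} (hu : ContDiff ℝ 2 u) :
    schrodinger ω (linearizedPotential g φ) (toC2 ∘ u) =
      fun x ↦ -symplecticC2 (toC2 (AopC g ω φ u x)) := by
  ext x : 1
  rw [toC2_AopC hu]
  exact (neg_eq_iff_eq_neg.2
    (isSkewComplexStructure_symplecticC2.apply_apply _)).symm

theorem aestronglyMeasurable_AopC (hV : Continuous (linearizedPotential g φ))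
    {u : Rn N → ℂ × ℂ} (hu : MemSobolev 2 u) : AEStronglyMeasurable (AopC g ω φ u) volume := by
  have hlift : AopC g ω φ u = toC2.symm ∘ symplecticC2 ∘
      schrodinger ω (linearizedPotential g φ) (toC2 ∘ u) := by
    ext x : 1
    simp only [Function.comp_apply, ← toC2_AopC hu.contDiff, toC2.symm_apply_apply]
  rw [hlift]
  exact (toC2.symm.continuous.comp symplecticC2.continuous).comp_aestronglyMeasurable
    (aestronglyMeasurable_schrodinger hV
      (hu.clm_comp ((toC2 : ℂ × ℂ →L[ℂ] C2).restrictScalars ℝ)))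

theorem toC2_comp_mem_schrodingerDomain {u : Rn N → ℂ × ℂ} (hu : MemSobolev 2 u)
    (hAu : MemLp (AopC g ω φ u) 2 volume) :
    toC2 ∘ u ∈ schrodingerDomain ω (linearizedPotential g φ) := by
  refine ⟨hu.clm_comp ((toC2 : ℂ × ℂ →L[ℂ] C2).restrictScalars ℝ), ?_⟩
  rw [schrodinger_toC2_comp hu.contDiff]
  exact (-(symplecticC2 ∘L (toC2 : ℂ × ℂ →L[ℂ] C2))).comp_memLp' hAu

theorem exists_domain_ae_eq {u : Rn N → ℂ × ℂ} {z : ℂ} (hu : MemSobolev 2 u)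
    (hres : MemLp (fun x ↦ AopC g ω φ u x - z • u x) 2 volume) :
    ∃ χ : (linearizedHamiltonian g ω φ).domain,
      ((χ : Lp C2 2 (volume : Measure (Rn N))) =ᵐ[volume] toC2 ∘ u) ∧
      ((symplecticL2 N (linearizedHamiltonian g ω φ χ) - z • (χ : Lp C2 2 volume) :
        Lp C2 2 (volume : Measure (Rn N))) =ᵐ[volume]
          fun x ↦ toC2 (AopC g ω φ u x - z • u x)) := by
  have hAu : MemLp (AopC g ω φ u) 2 volume := by
    have h := hres.add (hu.memLp.const_smul z)
    rwa [show (fun x ↦ AopC g ω φ u x - z • u x) + z • u = AopC g ω φ u from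
      funext fun x ↦ sub_add_cancel _ _] at h
  set a : schrodingerDomain ω (linearizedPotential g φ) :=
    ⟨toC2 ∘ u, toC2_comp_mem_schrodingerDomain hu hAu⟩
  have hχ := (schrodingerDomain.memSobolev a).memLp.coeFn_toLp
  refine ⟨schrodingerDomainEquiv ω _ a, hχ, ?_⟩
  have hH := schrodingerOperator_apply a
  change linearizedHamiltonian g ω φ _ = _ at hH
  rw [hH]
  have hHχ := (schrodingerDomain.schrodinger_memLp a).coeFn_toLp
  filter_upwards [Lp.coeFn_sub (symplecticL2 N ((schrodingerDomain.schrodinger_memLp a).toLp _))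
    (z • schrodingerDomain.toL2 ω _ a), Lp.coeFn_smul z (schrodingerDomain.toL2 ω _ a),
    symplecticC2.coeFn_compLpL ((schrodingerDomain.schrodinger_memLp a).toLp _), hχ, hHχ]
    with x hsub hsmul hJ hχx hHx
  refine hsub.trans ?_
  rw [Pi.sub_apply, hsmul, Pi.smul_apply, map_sub, map_smul, toC2_AopC hu.contDiff]
  exact congrArg₂ (· - ·) (hJ.trans (congrArg _ hHx)) (congrArg _ hχx)

theorem IsEigen.exists_domain {z : ℂ} (hz : IsEigen g ω φ z) :
    ∃ χ : (linearizedHamiltonian g ω φ).domain, χ ≠ 0 ∧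
      symplecticL2 N (linearizedHamiltonian g ω φ χ) = z • (χ : Lp C2 2 volume) := by
  obtain ⟨u, hu0, hu, heigen⟩ := hz
  have hzero (x : Rn N) : AopC g ω φ u x - z • u x = 0 := sub_eq_zero.2 (heigen x)
  obtain ⟨χ, hχ, hres⟩ := exists_domain_ae_eq (g := g) (ω := ω) (φ := φ) (z := z) hu
    (by simp only [hzero, MemLp.zero'])
  refine ⟨χ, fun h ↦ hu0 ?_, sub_eq_zero.1 ((Lp.eq_zero_iff_ae_eq_zero).2 ?_)⟩
  · rw [h, Submodule.coe_zero] at hχ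
    refine (hu.contDiff.continuous.ae_eq_iff_eq volume continuous_zero).1 ?_
    filter_upwards [hχ, Lp.coeFn_zero C2 2 (volume : Measure (Rn N))] with x hx h0
    exact toC2.map_eq_zero_iff.1 (hx.symm.trans h0)
  · simp only [hzero, map_zero] at hres
    exact hres

theorem WeaklyNull.of_tendsto_l2innerC2 {u : ℕ → Rn N → ℂ × ℂ}
    {v : ℕ → Lp C2 2 (volume : Measure (Rn N))} (hv : ∀ n, v n =ᵐ[volume] toC2 ∘ u n)
    (hu : ∀ w : Rn N → ℂ × ℂ, MemLp w 2 volume →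
      Tendsto (fun n ↦ l2innerC2 (u n) w) atTop (𝓝 0)) : WeaklyNull v := by
  intro w
  have hinner (n : ℕ) :
      inner ℂ w (v n) = (starRingEnd ℂ) (l2innerC2 (u n) (toC2.symm ∘ w)) := by
    rw [← inner_conj_symm, L2.inner_def]
    congr 1
    refine integral_congr_ae ?_
    filter_upwards [hv n] with x hx
    rw [hx, Function.comp_apply, ← inner_toC2, Function.comp_apply, toC2.apply_symm_apply]
  have hw : MemLp (toC2.symm ∘ w) 2 volume :=
    (toC2.symm : C2 →L[ℂ] ℂ × ℂ).comp_memLp' (Lp.memLp w)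
  simpa only [hinner, star_zero, starRingEnd_apply] using (hu _ hw).star

theorem eLpNorm_le_enorm_of_ae_eq_toC2 {u : Rn N → ℂ × ℂ}
    {v : Lp C2 2 (volume : Measure (Rn N))} (hv : v =ᵐ[volume] toC2 ∘ u) :
    eLpNorm u 2 volume ≤ ‖v‖ₑ := by
  rw [Lp.enorm_def, eLpNorm_congr_ae hv]
  exact eLpNorm_mono fun x ↦ norm_le_norm_toC2 (u x)

theorem enorm_le_of_ae_eq_toC2 {u : Rn N → ℂ × ℂ}
    {v : Lp C2 2 (volume : Measure (Rn N))} (hv : v =ᵐ[volume] toC2 ∘ u) :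
    ‖v‖ₑ ≤ ‖(toC2 : ℂ × ℂ →L[ℂ] C2)‖₊ * eLpNorm u 2 volume := by
  rw [Lp.enorm_def, eLpNorm_congr_ae hv]
  exact eLpNorm_le_nnreal_smul_eLpNorm_of_ae_le_mul
    (ae_of_all _ fun x ↦ (toC2 : ℂ × ℂ →L[ℂ] C2).le_opNNNorm (u x)) 2

theorem InEssSpec.exists_singular_sequence (hV : Continuous (linearizedPotential g φ)) {z : ℂ}
    (hz : InEssSpec g ω φ z) : ∃ χ : ℕ → (linearizedHamiltonian g ω φ).domain,
      WeaklyNull (fun n ↦ (χ n : Lp C2 2 (volume : Measure (Rn N)))) ∧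
      ¬Tendsto (fun n ↦ (χ n : Lp C2 2 (volume : Measure (Rn N)))) atTop (𝓝 0) ∧
      Tendsto (fun n ↦ symplecticL2 N (linearizedHamiltonian g ω φ (χ n)) -
        z • (χ n : Lp C2 2 (volume : Measure (Rn N)))) atTop (𝓝 0) := by
  obtain ⟨u, hu, hnorm, hres, hweak⟩ := hz
  obtain ⟨k, hk⟩ := eventually_atTop.1 (hres.eventually_lt_const zero_lt_top)
  have hmem (n : ℕ) : MemLp (fun x ↦ AopC g ω φ (u (n + k)) x - z • u (n + k) x) 2 volume :=
    ⟨(aestronglyMeasurable_AopC hV (hu _)).sub ((hu _).memLp.1.const_smul z),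
      hk _ (Nat.le_add_left k n)⟩
  choose χ hχ hχres using fun n ↦ exists_domain_ae_eq (hu (n + k)) (hmem n)
  refine ⟨χ, .of_tendsto_l2innerC2 hχ fun w hw ↦ (tendsto_add_atTop_iff_nat k).2 (hweak w hw),
    fun hlim ↦ ?_, ?_⟩
  · refine one_ne_zero (le_zero_iff.1 (ge_of_tendsto' (tendsto_zero_iff_enorm_tendsto_zero.1 hlim)
      fun n ↦ ?_))
    exact (hnorm (n + k)).symm.trans_le (eLpNorm_le_enorm_of_ae_eq_toC2 (hχ n))
  · rw [tendsto_zero_iff_enorm_tendsto_zero]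
    have hbound := ENNReal.Tendsto.const_mul ((tendsto_add_atTop_iff_nat k).2 hres)
      (.inr (coe_ne_top (r := ‖(toC2 : ℂ × ℂ →L[ℂ] C2)‖₊)))
    rw [mul_zero] at hbound
    exact tendsto_of_tendsto_of_tendsto_of_le_of_le tendsto_const_nhds hbound (fun _ ↦ zero_le)
      fun n ↦ enorm_le_of_ae_eq_toC2 (hχres n)

theorem essential_spectrum_and_finitely_many_unstable_eigenvalues_general (hN : 1 ≤ N)
    (hω : 0 < ω) (hφ : MemSobolev 1 φ) (hf : ContDiff ℝ 1 (fpot g))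
    (hf0 : fderiv ℝ (fpot g) 0 = 0) {p C : ℝ} (hp : Subcrit N p)
    (hgrowth : ∀ z, ‖fderiv ℝ (fpot g) z‖ ≤ C * (1 + ‖z‖ ^ (p - 1))) :
    (∀ z : ℂ, InEssSpec g ω φ z → z.re = 0) ∧
    Set.Finite {z : ℂ | 0 < z.re ∧ IsEigen g ω φ z} := by
  have hJ := isSkewComplexStructure_symplecticL2 (N := N)
  have hH := linearizedHamiltonian_isFormalAdjoint (ω := ω) (φ := φ) hf
  have hV := continuous_linearizedPotential hf hφ.contDiff.continuous
  have hcoercive : CoerciveModCompact (linearizedHamiltonian g ω φ) :=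
    schrodingerOperator_coerciveModCompact hω hV
      (linearizedPotential_vanishesAtInfinityAsForm hN hφ hf hf0 hp hgrowth)
  refine ⟨fun z hz ↦ ?_, (finite_unstable_eigenvalues hJ hH hcoercive).subset
    fun z hz ↦ ⟨hz.1, hz.2.exists_domain⟩⟩
  obtain ⟨χ, hweak, hsing, hres⟩ := hz.exists_singular_sequence hV
  exact re_eq_zero_of_singular_sequence hJ hH hcoercive hweak hsing hres

end LinearizedOperator
end

noncomputable section

/-- under (H1)-(H2) the essential spectrum of A = J(H₀ + Df(φ)) lies on the
imaginary axis and A has only finitely many eigenvalues with positive real part. -/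
theorem essential_spectrum_and_finitely_many_unstable_eigenvalues
    {N : ℕ} (hN : 1 ≤ N) (g : ℝ → ℝ) (f₁ f₂ : ℂ → ℂ) (p₁ p₂ ω : ℝ)
    (φ : Rn N → ℂ)
    (h1 : H1full N g f₁ f₂ p₁ p₂) (h2 : H2hyp ω g φ) :
    (∀ z : ℂ, InEssSpec g ω φ z → z.re = 0) ∧
    Set.Finite {z : ℂ | 0 < z.re ∧ IsEigen g ω φ z} := by
  obtain ⟨C, hgrowth⟩ := h1.exists_norm_fderiv_fpot_le
  exact essential_spectrum_and_finitely_many_unstable_eigenvalues_general hN h2.1 h2.2.2.1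
    h1.contDiff_fpot h1.fderiv_fpot_zero h1.subcrit_max hgrowth

end
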